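/- arXiv:1709.06522 — 3 statements merged into one kernel-verified Lean document; each statement's English description precedes it below -/
import Mathlib

section
/- Let e ∈ S^d, a ∈ (0,π/2), and let K ∈ 𝒦̄_s^d satisfy e ∈ K ⊆ H_e^+ and r_e(K) ≥ a. Then Ũ_e(K) ≥ Ũ_e(B(e,a)) = σ_d(B(e,2a)), with equality if and only if K = B(e,a). -/
open Real MeasureTheory Filter
open scoped RealInnerProductSpace ENNReal NNReal Topology

noncomputable section

/-- The ambient Euclidean space `ℝ^{d+1}`. -/
abbrev Esp (d : ℕ) : Type := EuclideanSpace ℝ (Fin (d + 1))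

/-- The unit sphere `S^d ⊂ ℝ^{d+1}`. -/
def uSphere (d : ℕ) : Set (Esp d) := Metric.sphere 0 1

/-- The spherical Lebesgue measure `σ_d` (d-dimensional Hausdorff measure restricted
to the unit sphere). -/
def sigmaMeas (d : ℕ) : Measure (Esp d) := (μH[(d : ℝ)]).restrict (uSphere d)

/-- `ω_{d+1} = σ_d(S^d)`, the total surface area of the unit sphere in `ℝ^{d+1}`. -/
def omegaTot (d : ℕ) : ℝ := (sigmaMeas d (uSphere d)).toReal

/-- `ω_d`, the `(d-1)`-dimensional measure of the unit sphere `S^{d-1} ⊂ ℝ^d`. -/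
def omegaSm (d : ℕ) : ℝ :=
  (μH[((d : ℝ) - 1)] (Metric.sphere (0 : EuclideanSpace ℝ (Fin d)) 1)).toReal

/-- `κ_d`, the volume of the unit ball in `ℝ^d`. -/
def kappaVol (d : ℕ) : ℝ :=
  (volume (Metric.ball (0 : EuclideanSpace ℝ (Fin d)) 1)).toReal

/-- The geodesic (angular) distance `d_s(x,y) = arccos ⟨x,y⟩` on the unit sphere. -/
def geo {d : ℕ} (x y : Esp d) : ℝ := Real.arccos ⟪x, y⟫

/-- The spherical ball (cap) `B(e,α)` of radius `α` centred at `e`. -/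
def cap {d : ℕ} (e : Esp d) (α : ℝ) : Set (Esp d) := {x ∈ uSphere d | geo x e ≤ α}

/-- `K ∈ 𝒦̄_s^d`: a spherically convex body, i.e. the intersection of the unit sphere
with a closed convex cone `C ≠ {0}` which is not a linear subspace. -/
def IsSphConvBody (d : ℕ) (K : Set (Esp d)) : Prop :=
  ∃ C : Set (Esp d), IsClosed C ∧ Convex ℝ C ∧
    (∀ x ∈ C, ∀ t : ℝ, 0 ≤ t → t • x ∈ C) ∧
    C ≠ {0} ∧ (∀ L : Submodule ℝ (Esp d), C ≠ (L : Set (Esp d))) ∧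
    K = C ∩ uSphere d

/-- `K ∈ 𝒦_s^d`: a proper spherically convex body, i.e. the intersection of the unit
sphere with a line-free closed convex cone `C ≠ {0}`. -/
def IsProperSphConvBody (d : ℕ) (K : Set (Esp d)) : Prop :=
  ∃ C : Set (Esp d), IsClosed C ∧ Convex ℝ C ∧
    (∀ x ∈ C, ∀ t : ℝ, 0 ≤ t → t • x ∈ C) ∧
    C ≠ {0} ∧ (∀ x ∈ C, x ≠ 0 → -x ∉ C) ∧
    K = C ∩ uSphere d

/-- The spherical mean width functional
`U₁(K) = (1/(2 ω_{d+1})) σ_d({x ∈ S^d : x^⊥ ∩ K ≠ ∅})`. -/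
def U1 (d : ℕ) (K : Set (Esp d)) : ℝ :=
  (1 / (2 * omegaTot d)) * (sigmaMeas d {x | ∃ y ∈ K, ⟪x, y⟫ = 0}).toReal

/-- `D(x) = ∫₀^x sin^{d-1} t dt`. -/
def Dfun (d : ℕ) (x : ℝ) : ℝ := ∫ t in (0:ℝ)..x, Real.sin t ^ (d - 1)

/-- `S_e = S^d ∩ e^⊥`, the great subsphere orthogonal to `e`. -/
def equator {d : ℕ} (e : Esp d) : Set (Esp d) := uSphere d ∩ {x | ⟪x, e⟫ = 0}

/-- The rotation invariant probability measure `σ⁰_{d-1}` on the great subsphere `S_e`. -/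
def sigma0 (d : ℕ) (e : Esp d) : Measure (Esp d) :=
  (μH[((d : ℝ) - 1)] (equator e))⁻¹ • (μH[((d : ℝ) - 1)]).restrict (equator e)

/-- The spherical radial function `α_{K,e}(u)`: the geodesic distance from `e` to the
boundary of `K` along the great circle through `e` in direction `u ∈ S_e`. -/
def sphRadial {d : ℕ} (K : Set (Esp d)) (e u : Esp d) : ℝ :=
  sSup {t : ℝ | 0 ≤ t ∧ t ≤ π / 2 ∧ (Real.cos t) • e + (Real.sin t) • u ∈ K}

/-- The set `-int(K*)`: points `e` of the sphere such that `K` is contained in the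
open hemisphere centred at `e`. -/
def negIntPolar (d : ℕ) (K : Set (Esp d)) : Set (Esp d) :=
  {e ∈ uSphere d | ∀ x ∈ K, 0 < ⟪e, x⟫}

/-- Points `e` of the sphere such that `K ⊆ {x : ⟨x,e⟩ ≥ 0}` (closed hemisphere). -/
def hemiCenters (d : ℕ) (K : Set (Esp d)) : Set (Esp d) :=
  {e ∈ uSphere d | ∀ x ∈ K, 0 ≤ ⟪x, e⟫}

/-- The `σ⁰_{d-1}`-average of `D ∘ α_{K,e}` over `S_e`. -/
def avgD (d : ℕ) (K : Set (Esp d)) (e : Esp d) : ℝ :=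
  ∫ u, Dfun d (sphRadial K e u) ∂(sigma0 d e)

/-- The `L²(S_e, σ⁰_{d-1})`-deviation of `D ∘ α_{K,e}` from its average. -/
def L2dev (d : ℕ) (K : Set (Esp d)) (e : Esp d) : ℝ :=
  Real.sqrt (∫ u, (Dfun d (sphRadial K e u) - avgD d K e) ^ 2 ∂(sigma0 d e))

/-- `Δ₂(K)`: infimum of the `L²` deviations over `e ∈ -int(K*)`. -/
def Delta2 (d : ℕ) (K : Set (Esp d)) : ℝ :=
  sInf (L2dev d K '' negIntPolar d K)

/-- `Δ₂*(K)`: infimum of the `L²` deviations over all `e` with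
`K ⊆ {x : ⟨x,e⟩ ≥ 0}`. -/
def Delta2Star (d : ℕ) (K : Set (Esp d)) : ℝ :=
  sInf (L2dev d K '' hemiCenters d K)

/-- The centred spherical inradius `r_e(K) = max{r ≥ 0 : B(e,r) ⊆ K}`. -/
def rcent (d : ℕ) (K : Set (Esp d)) (e : Esp d) : ℝ :=
  sSup {r : ℝ | 0 ≤ r ∧ cap e r ⊆ K}

/-- The centred spherical circumradius `R_e(K) = min{r ≥ 0 : K ⊆ B(e,r)}`. -/
def Rcent (d : ℕ) (K : Set (Esp d)) (e : Esp d) : ℝ :=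
  sInf {r : ℝ | 0 ≤ r ∧ K ⊆ cap e r}

/-- The spherical inradius `Σ_r(K) = max{r_e(K) : e ∈ K}`. -/
def SigmaR (d : ℕ) (K : Set (Esp d)) : ℝ :=
  sSup (rcent d K '' K)

/-- The deviation functional `ϑ_r(K) = min{R_e(K) - r_e(K) : e ∈ K, r_e(K) = Σ_r(K)}`. -/
def thetaR (d : ℕ) (K : Set (Esp d)) : ℝ :=
  sInf ((fun e => Rcent d K e - rcent d K e) '' {e ∈ K | rcent d K e = SigmaR d K})

/-- `Ũ_e(K) = σ_d({x ∈ S^d : (x-e)^⊥ ∩ K ≠ ∅})`. -/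
def Utilde (d : ℕ) (e : Esp d) (K : Set (Esp d)) : ℝ :=
  (sigmaMeas d {x | ∃ y ∈ K, ⟪x - e, y⟫ = 0}).toReal

/-- The spherical Hausdorff distance `δ_s`, based on the geodesic metric. -/
def sphHausdorff (d : ℕ) (K L : Set (Esp d)) : ℝ :=
  max (⨆ x ∈ K, ⨅ y ∈ L, geo x y) (⨆ y ∈ L, ⨅ x ∈ K, geo x y)

/-- Continuity of a functional on `𝒦̄_s^d` with respect to the spherical Hausdorff
metric `δ_s`. -/
def SphContinuous (d : ℕ) (F : Set (Esp d) → ℝ) : Prop :=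
  ∀ K, IsSphConvBody d K → ∀ ε > (0:ℝ), ∃ δ > (0:ℝ), ∀ L, IsSphConvBody d L →
    sphHausdorff d K L < δ → |F K - F L| < ε

/-- A hitting functional: continuous, nonnegative, vanishing exactly on one-pointed
sets. -/
def IsHittingFunctional (d : ℕ) (Φ : Set (Esp d) → ℝ) : Prop :=
  SphContinuous d Φ ∧ (∀ K, IsSphConvBody d K → 0 ≤ Φ K) ∧
    (∀ K, IsSphConvBody d K → (Φ K = 0 ↔ ∃ p, K = {p}))

/-- A size functional: continuous, nonnegative, not identically zero, vanishing on
one-pointed sets. -/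
def IsSizeFunctional (d : ℕ) (S : Set (Esp d) → ℝ) : Prop :=
  SphContinuous d S ∧ (∀ K, IsSphConvBody d K → 0 ≤ S K) ∧
    (∃ K, IsSphConvBody d K ∧ S K ≠ 0) ∧
    (∀ p ∈ uSphere d, S ({p} : Set (Esp d)) = 0)

/-- The isoperimetric constant `τ(Φ,Σ,a) = inf{Φ(K) : K ∈ 𝒦̄_s^d, Σ(K) ≥ a}`. -/
def tauConst (d : ℕ) (Φ S : Set (Esp d) → ℝ) (a : ℝ) : ℝ :=
  sInf (Φ '' {K | IsSphConvBody d K ∧ a ≤ S K})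

/-- The spherical convex hull of a set `V ⊆ S^d`: the intersection of the sphere with
the closed convex cone generated by `V`. -/
def sphConvHull (d : ℕ) (V : Set (Esp d)) : Set (Esp d) :=
  {x ∈ uSphere d | ∃ y ∈ convexHull ℝ V, ∃ t : ℝ, 0 < t ∧ x = t • y}

/-- A spherical polytope: the intersection of the sphere with a finitely generated
(polyhedral) cone, which is also a spherically convex body. -/
def IsSphPolytope (d : ℕ) (P : Set (Esp d)) : Prop :=
  IsSphConvBody d P ∧ ∃ V : Finset (Esp d),
    (V : Set (Esp d)) ⊆ uSphere d ∧ P = sphConvHull d (V : Set (Esp d))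

/-- The vertices (extreme points) of a spherical polytope. -/
def sphExtremePoints (d : ℕ) (P : Set (Esp d)) : Set (Esp d) :=
  {x ∈ P | x ∉ sphConvHull d (P \ {x})}

/-- The boundary of `K` relative to the sphere. -/
def sphFrontier (d : ℕ) (K : Set (Esp d)) : Set (Esp d) :=
  {x ∈ K | ∀ ε > (0:ℝ), ∃ y ∈ uSphere d, y ∉ K ∧ dist y x < ε}

/-- The functions `h_m(t) = (-1)^{m+1} e^{-t} + 2 ∑_{i=0}^{⌊m/2⌋} t^{m-2i}/(m-2i)!`. -/
def hFun (m : ℕ) (t : ℝ) : ℝ :=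
  (-1 : ℝ) ^ (m + 1) * Real.exp (-t) +
    2 * ∑ i ∈ Finset.range (m / 2 + 1), t ^ (m - 2 * i) / (Nat.factorial (m - 2 * i) : ℝ)

section SphereMeasure

variable {E : Type*} [NormedAddCommGroup E] [InnerProductSpace ℝ E]

/-- The map inverse to stereographic projection from `-x` takes the value `x` at the origin. -/
theorem stereoInvFunAux_neg_zero (x : E) : stereoInvFunAux (-x) (0 : E) = x := by
  simp [stereoInvFunAux_apply, smul_smul]

theorem inner_neg_self_ne_one {x : E} (hx : ‖x‖ = 1) : innerSL ℝ (-x) x ≠ (1 : ℝ) := by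
  simp [hx]
  norm_num

theorem contDiffAt_stereoToFun_neg {x : E} (hx : ‖x‖ = 1) :
    ContDiffAt ℝ 1 (stereoToFun (-x)) x := by
  refine contDiffOn_stereoToFun.contDiffAt (IsOpen.mem_nhds ?_ (inner_neg_self_ne_one hx))
  exact isOpen_ne_fun (innerSL ℝ (-x)).continuous continuous_const

theorem stereoToFun_neg_self (x : E) : stereoToFun (-x) x = 0 := by
  have h : (ℝ ∙ (-x))ᗮ.orthogonalProjectionOnto x = 0 := by
    rw [Submodule.orthogonalProjectionOnto_eq_zero_iff, Submodule.orthogonal_orthogonal]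
    exact Submodule.mem_span_singleton.2 ⟨-1, by simp⟩
  rw [stereoToFun_apply, h, smul_zero]

variable [FiniteDimensional ℝ E] [MeasurableSpace E] [BorelSpace E]

theorem isAddHaarMeasure_hausdorffMeasure_orthogonal {d : ℕ} (hd : Module.finrank ℝ E = d + 1)
    {v : E} (hv : ‖v‖ = 1) : (μH[(d : ℝ)] : Measure (ℝ ∙ v)ᗮ).IsAddHaarMeasure := by
  have : Fact (Module.finrank ℝ E = d + 1) := ⟨hd⟩
  have hv0 : v ≠ 0 := by
    rintro rfl
    simp at hv
  rw [← Submodule.finrank_orthogonal_span_singleton (𝕜 := ℝ) (n := d) hv0]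
  infer_instance

/-- The unit sphere of a `(d+1)`-dimensional space has finite `d`-dimensional measure. -/
theorem hausdorffMeasure_sphere_lt_top {d : ℕ} (hd : Module.finrank ℝ E = d + 1) :
    μH[(d : ℝ)] (Metric.sphere (0 : E) 1) < ⊤ := by
  refine (isCompact_sphere (0 : E) 1).measure_lt_top_of_nhdsWithin fun x hx => ?_
  have hx : ‖x‖ = 1 := by simpa using hx
  have hv : ‖-x‖ = 1 := by simpa using hx
  have := isAddHaarMeasure_hausdorffMeasure_orthogonal hd hv
  have hf : ContDiffAt ℝ 1 (fun w : (ℝ ∙ (-x))ᗮ => stereoInvFunAux (-x) (w : E)) 0 :=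
    (contDiff_stereoInvFunAux.comp (ℝ ∙ (-x))ᗮ.subtypeL.contDiff).contDiffAt
  obtain ⟨C, t, ht, hC⟩ := hf.exists_lipschitzOnWith
  set s := t ∩ Metric.closedBall 0 1
  have hs : s ∈ 𝓝 (stereoToFun (-x) x) := by
    rw [stereoToFun_neg_self]
    exact Filter.inter_mem ht (Metric.closedBall_mem_nhds _ one_pos)
  have hne : x ≠ -x := fun h => inner_neg_self_ne_one hx (by
    rw [← h]
    simp [hx])
  refine ⟨(fun w : (ℝ ∙ (-x))ᗮ => stereoInvFunAux (-x) (w : E)) '' s, ?_, ?_⟩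
  · filter_upwards [self_mem_nhdsWithin, nhdsWithin_le_nhds
      ((contDiffAt_stereoToFun_neg hx).continuousAt.preimage_mem_nhds hs),
      nhdsWithin_le_nhds (isOpen_ne.mem_nhds hne)] with y hyS hys hyx
    exact ⟨stereoToFun (-x) y, hys,
      congrArg Subtype.val (stereo_left_inv hv (x := ⟨y, hyS⟩) hyx)⟩
  · refine ((hC.mono Set.inter_subset_left).hausdorffMeasure_image_le d.cast_nonneg).trans_lt ?_
    exact ENNReal.mul_lt_top (ENNReal.rpow_lt_top_of_nonneg d.cast_nonneg ENNReal.coe_ne_top)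
      ((measure_mono Set.inter_subset_right).trans_lt
        (isCompact_closedBall _ _).measure_lt_top)

/-- A neighbourhood of a point of the unit sphere of a `(d+1)`-dimensional space meets the sphere
in a set of positive `d`-dimensional measure. -/
theorem hausdorffMeasure_inter_sphere_pos {d : ℕ} (hd : Module.finrank ℝ E = d + 1) {U : Set E}
    {x : E} (hU : U ∈ 𝓝 x) (hx : ‖x‖ = 1) :
    0 < μH[(d : ℝ)] (U ∩ Metric.sphere (0 : E) 1) := by
  have hv : ‖-x‖ = 1 := by simpa using hx
  have := isAddHaarMeasure_hausdorffMeasure_orthogonal hd hv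
  obtain ⟨C, t, ht, hC⟩ := (contDiffAt_stereoToFun_neg hx).exists_lipschitzOnWith
  have hf : Continuous (fun w : (ℝ ∙ (-x))ᗮ => stereoInvFunAux (-x) (w : E)) :=
    (contDiff_stereoInvFunAux (m := 0)).continuous.comp continuous_subtype_val
  have hW : (fun w : (ℝ ∙ (-x))ᗮ => stereoInvFunAux (-x) (w : E)) ⁻¹' (U ∩ t) ∈ 𝓝 0 := by
    refine hf.continuousAt.preimage_mem_nhds ?_
    simpa only [Submodule.coe_zero, stereoInvFunAux_neg_zero] using Filter.inter_mem hU ht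
  have hsub : (fun w : (ℝ ∙ (-x))ᗮ => stereoInvFunAux (-x) (w : E)) ⁻¹' (U ∩ t) ⊆
      stereoToFun (-x) '' (U ∩ t ∩ Metric.sphere (0 : E) 1) := fun w hw =>
    ⟨stereoInvFunAux (-x) w, ⟨hw, stereoInvFunAux_mem hv w.2⟩, stereo_right_inv hv w⟩
  by_contra h0
  have h0 : μH[(d : ℝ)] (U ∩ t ∩ Metric.sphere (0 : E) 1) = 0 :=
    measure_mono_null (by gcongr; exact Set.inter_subset_left) (nonpos_iff_eq_zero.1 (not_lt.1 h0))
  have hle := (hC.mono (s := U ∩ t ∩ Metric.sphere (0 : E) 1)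
    fun y hy => hy.1.2).hausdorffMeasure_image_le d.cast_nonneg
  rw [h0, mul_zero] at hle
  exact (Measure.measure_pos_of_mem_nhds _ hW).not_ge ((measure_mono hsub).trans hle)

end SphereMeasure

section Cap

variable {d : ℕ} {e : Esp d}

theorem mem_uSphere {x : Esp d} : x ∈ uSphere d ↔ ‖x‖ = 1 := by
  simp [uSphere]

theorem measurableSet_uSphere (d : ℕ) : MeasurableSet (uSphere d) :=
  Metric.isClosed_sphere.measurableSet

theorem mem_cap_iff (he : ‖e‖ = 1) {α : ℝ} (h0 : 0 ≤ α) (hπ : α ≤ π) {x : Esp d} :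
    x ∈ cap e α ↔ ‖x‖ = 1 ∧ Real.cos α ≤ ⟪x, e⟫ := by
  simp only [cap, geo, Set.mem_ofPred_eq, mem_uSphere]
  refine and_congr_right fun hx => ?_
  have h := abs_le.1 (abs_real_inner_le_norm x e)
  rw [hx, he, one_mul] at h
  nth_rw 1 [← Real.arccos_cos h0 hπ]
  exact Real.strictAntiOn_arccos.le_iff_ge ⟨h.1, h.2⟩ ⟨Real.neg_one_le_cos _, Real.cos_le_one _⟩

theorem norm_add_sq_of_unit (he : ‖e‖ = 1) {x : Esp d} (hx : ‖x‖ = 1) :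
    ‖x + e‖ ^ 2 = 2 + 2 * ⟪x, e⟫ := by
  rw [norm_add_sq_real, hx, he]
  ring

theorem inner_sub_add_of_unit (he : ‖e‖ = 1) {x : Esp d} (hx : ‖x‖ = 1) :
    ⟪x - e, x + e⟫ = 0 := by
  rw [inner_sub_left, inner_add_right, inner_add_right, real_inner_self_eq_norm_sq,
    real_inner_self_eq_norm_sq, hx, he, real_inner_comm e x]
  ring

/-- The hyperplane `(x - e)^⊥` bisecting `x` and `e` hits the cap `B(e,a)` exactly when `x` lies
in the cap `B(e,2a)`. -/
theorem hitting_cap_inter_uSphere (he : ‖e‖ = 1) {a : ℝ} (ha : 0 < a) (ha' : a < π / 2) :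
    {x | ∃ y ∈ cap e a, ⟪x - e, y⟫ = 0} ∩ uSphere d = cap e (2 * a) := by
  have hcos : 0 < Real.cos a := Real.cos_pos_of_mem_Ioo ⟨by linarith, ha'⟩
  ext x
  rw [mem_cap_iff he (by linarith) (by linarith), Set.mem_inter_iff, mem_uSphere,
    Set.mem_ofPred_eq, and_comm]
  refine and_congr_right fun hx => ?_
  have hsq := norm_add_sq_of_unit he hx
  rw [Real.cos_two_mul]
  constructor
  · rintro ⟨y, hy, hxy⟩
    rw [mem_cap_iff he ha.le (by linarith)] at hy
    rw [inner_sub_left, sub_eq_zero] at hxy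
    have h := real_inner_le_norm (x + e) y
    rw [inner_add_left, hxy, hy.1, real_inner_comm y e] at h
    nlinarith
  · intro h
    have hle : 2 * Real.cos a ≤ ‖x + e‖ := by
      refine (sq_le_sq₀ (by positivity) (norm_nonneg _)).1 ?_
      nlinarith
    have hpos : 0 < ‖x + e‖ := by linarith
    refine ⟨‖x + e‖⁻¹ • (x + e), (mem_cap_iff he ha.le (by linarith)).2 ⟨?_, ?_⟩, ?_⟩
    · rw [norm_smul, norm_inv, norm_norm, inv_mul_cancel₀ hpos.ne']
    · rw [real_inner_smul_left, inner_add_left, real_inner_self_eq_norm_sq, he,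
        inv_mul_eq_div, le_div_iff₀ hpos]
      nlinarith
    · rw [real_inner_smul_right, inner_sub_add_of_unit he hx, mul_zero]

end Cap

section Cone

variable {d : ℕ} {e : Esp d} {C : Set (Esp d)}

/-- If a cone contains caps `B(e,s)` with `s` arbitrarily close to `a` or larger, then it contains
the open circular cone around `e` of angle `a`. -/
theorem mem_cone_of_lt_inner (he : ‖e‖ = 1) {a : ℝ} (ha : 0 < a) (ha' : a < π / 2)
    (hcone : ∀ x ∈ C, ∀ t : ℝ, 0 ≤ t → t • x ∈ C)
    (hr : ∀ r < a, ∃ s > r, cap e s ⊆ C) {x : Esp d} (hx : Real.cos a * ‖x‖ < ⟪x, e⟫) :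
    x ∈ C := by
  have hx0 : x ≠ 0 := by
    rintro rfl
    simp at hx
  have hpos : 0 < ‖x‖ := norm_pos_iff.2 hx0
  set y := ‖x‖⁻¹ • x with hy
  have hyn : ‖y‖ = 1 := by
    rw [hy, norm_smul, norm_inv, norm_norm, inv_mul_cancel₀ hpos.ne']
  have hye : Real.cos a < ⟪y, e⟫ := by
    rw [hy, real_inner_smul_left, inv_mul_eq_div, lt_div_iff₀ hpos]
    exact hx
  have hlt : geo y e < a := by
    have h := abs_le.1 (abs_real_inner_le_norm y e)
    rw [hyn, he, one_mul] at h
    rw [geo, ← Real.arccos_cos ha.le (by linarith)]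
    exact Real.arccos_lt_arccos (Real.neg_one_le_cos a) hye h.2
  obtain ⟨s, hs, hsC⟩ := hr _ hlt
  have := hcone y (hsC ⟨mem_uSphere.2 hyn, hs.le⟩) ‖x‖ hpos.le
  rwa [hy, smul_smul, mul_inv_cancel₀ hpos.ne', one_smul] at this

theorem cap_subset_cone (he : ‖e‖ = 1) {a : ℝ} (ha : 0 < a) (ha' : a < π / 2)
    (hclosed : IsClosed C) (hC : ∀ x : Esp d, Real.cos a * ‖x‖ < ⟪x, e⟫ → x ∈ C) :
    cap e a ⊆ C := by
  intro x hx
  rw [mem_cap_iff he ha.le (by linarith)] at hx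
  have hlim : Tendsto (fun t : ℝ => x + t • e) (𝓝[>] 0) (𝓝 x) := by
    have : Continuous fun t : ℝ => x + t • e := by fun_prop
    simpa using (this.tendsto 0).mono_left nhdsWithin_le_nhds
  refine hclosed.mem_of_tendsto hlim ?_
  filter_upwards [self_mem_nhdsWithin] with t (ht : 0 < t)
  have hcos : 0 < Real.cos a := Real.cos_pos_of_mem_Ioo ⟨by linarith, ha'⟩
  have hcos1 : Real.cos a < 1 := by
    rw [← Real.cos_zero]
    exact Real.cos_lt_cos_of_nonneg_of_le_pi_div_two le_rfl ha'.le ha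
  apply hC
  have hn : ‖x + t • e‖ ≤ 1 + t := by
    refine (norm_add_le _ _).trans_eq ?_
    rw [norm_smul, hx.1, he, Real.norm_of_nonneg ht.le, mul_one]
  rw [inner_add_left, real_inner_smul_left, real_inner_self_eq_norm_sq, he]
  nlinarith

/-- A convex cone which contains the circular cone of angle `a` around `e` and some further point
in the half-space of `e` has an interior point outside that circular cone. -/
theorem exists_mem_interior_inner_lt {a : ℝ} (he : ‖e‖ = 1) (hcos1 : Real.cos a < 1)
    (hconv : Convex ℝ C) (hcone : ∀ x ∈ C, ∀ t : ℝ, 0 ≤ t → t • x ∈ C)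
    (hC : ∀ x : Esp d, Real.cos a * ‖x‖ < ⟪x, e⟫ → x ∈ C) {y : Esp d} (hy : y ∈ C)
    (hye0 : 0 ≤ ⟪y, e⟫) (hye : ⟪y, e⟫ < Real.cos a * ‖y‖) :
    ∃ z ∈ interior C, 0 < ⟪z, e⟫ ∧ ⟪z, e⟫ < Real.cos a * ‖z‖ := by
  have hlim : Tendsto (fun t : ℝ => y + t • e) (𝓝[>] 0) (𝓝 y) := by
    have : Continuous fun t : ℝ => y + t • e := by fun_prop
    simpa using (this.tendsto 0).mono_left nhdsWithin_le_nhds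
  have hopen : IsOpen {z : Esp d | ⟪z, e⟫ < Real.cos a * ‖z‖} :=
    isOpen_lt (by fun_prop) (by fun_prop)
  obtain ⟨t, ht, hte⟩ := ((hlim.eventually (hopen.mem_nhds hye)).and self_mem_nhdsWithin).exists
  have hte : 0 < t := hte
  refine ⟨y + t • e, ?_, ?_, ht⟩
  · have hO : IsOpen {z : Esp d | Real.cos a * ‖z - y‖ < ⟪z - y, e⟫} :=
      isOpen_lt (by fun_prop) (by fun_prop)
    refine interior_maximal ?_ hO ?_
    · intro z hz
      have h := hconv hy (hC _ hz) (a := 1 / 2) (b := 1 / 2) (by norm_num) (by norm_num)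
        (by norm_num)
      have := hcone _ h 2 (by norm_num)
      rwa [← smul_add, add_sub_cancel, smul_smul, mul_one_div_cancel two_ne_zero, one_smul] at this
    · simp only [Set.mem_ofPred_eq, add_sub_cancel_left]
      rw [norm_smul, real_inner_smul_left, real_inner_self_eq_norm_sq, he,
        Real.norm_of_nonneg hte.le]
      nlinarith
  · rw [inner_add_left, real_inner_smul_left, real_inner_self_eq_norm_sq, he]
    linarith

/-- Reflecting `e` in an interior point of the cone outside the circular cone of angle `a` gives a
point of the sphere around which every hyperplane `(x - e)^⊥` hits the cone while `x` stays away
from `B(e,2a)`. -/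
theorem exists_unit_add_mem_interior (he : ‖e‖ = 1) {a : ℝ}
    (hcone : ∀ x ∈ C, ∀ t : ℝ, 0 ≤ t → t • x ∈ C) {z : Esp d} (hz : z ∈ interior C)
    (hz0 : 0 < ⟪z, e⟫) (hza : ⟪z, e⟫ < Real.cos a * ‖z‖) :
    ∃ x : Esp d, ‖x‖ = 1 ∧ x + e ∈ interior C ∧ 0 < ‖x + e‖ ∧ ⟪x, e⟫ < Real.cos (2 * a) := by
  have hzne : z ≠ 0 := by
    rintro rfl
    simp at hz0
  have hpos : 0 < ‖z‖ := norm_pos_iff.2 hzne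
  set c : ℝ := 2 * ⟪z, e⟫ / ‖z‖ ^ 2 with hc
  have hcpos : 0 < c := by positivity
  have hcz : c * ‖z‖ ^ 2 = 2 * ⟪z, e⟫ := by
    rw [hc]
    field_simp
  refine ⟨c • z - e, ?_, ?_, ?_, ?_⟩
  · rw [← sq_eq_sq₀ (norm_nonneg _) zero_le_one, norm_sub_sq_real, norm_smul, mul_pow,
      Real.norm_of_nonneg hcpos.le, real_inner_smul_left, he]
    linear_combination c * hcz
  · rw [sub_add_cancel]
    refine interior_maximal (s := C) ?_ (isOpen_interior.smul₀ hcpos.ne')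
      (Set.smul_mem_smul_set hz)
    rintro _ ⟨w, hw, rfl⟩
    exact hcone w (interior_subset hw) c hcpos.le
  · rw [sub_add_cancel]
    exact norm_pos_iff.2 (smul_ne_zero hcpos.ne' hzne)
  · rw [inner_sub_left, real_inner_smul_left, real_inner_self_eq_norm_sq, he, Real.cos_two_mul]
    have h : c * ⟪z, e⟫ = 2 * (⟪z, e⟫ / ‖z‖) ^ 2 := by
      rw [hc]
      field_simp
    have h1 : ⟪z, e⟫ / ‖z‖ < Real.cos a := (div_lt_iff₀ hpos).2 hza
    have h0 : 0 < ⟪z, e⟫ / ‖z‖ := by positivity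
    nlinarith

end Cone

theorem sigmaMeas_lt_top (d : ℕ) (s : Set (Esp d)) : sigmaMeas d s < ⊤ := by
  rw [sigmaMeas, Measure.restrict_apply' (measurableSet_uSphere d)]
  exact (measure_mono Set.inter_subset_right).trans_lt (hausdorffMeasure_sphere_lt_top (by simp))

/-- Theorem D, first part. If `e ∈ K ⊆ H_e^+` and `r_e(K) ≥ a`, then
`Ũ_e(K) ≥ Ũ_e(B(e,a)) = σ_d(B(e,2a))`, with equality iff `K = B(e,a)`. -/
theorem statement3 (d : ℕ) (hd : 2 ≤ d) (e : Esp d) (he : e ∈ uSphere d)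
    (a : ℝ) (ha : 0 < a) (ha' : a < π / 2) (K : Set (Esp d))
    (hK : IsSphConvBody d K) (heK : e ∈ K) (hhemi : ∀ x ∈ K, 0 ≤ ⟪x, e⟫)
    (hr : a ≤ rcent d K e) :
    Utilde d e K ≥ Utilde d e (cap e a) ∧
    Utilde d e (cap e a) = (sigmaMeas d (cap e (2 * a))).toReal ∧
    (Utilde d e K = Utilde d e (cap e a) ↔ K = cap e a) := by
  have he1 : ‖e‖ = 1 := mem_uSphere.1 he
  obtain ⟨C, hclosed, hconv, hcone, -, -, rfl⟩ := hK
  have hcos1 : Real.cos a < 1 := by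
    rw [← Real.cos_zero]
    exact Real.cos_lt_cos_of_nonneg_of_le_pi_div_two le_rfl ha'.le ha
  have hr' : ∀ r < a, ∃ s > r, cap e s ⊆ C := by
    intro r hra
    have hne : {r : ℝ | 0 ≤ r ∧ cap e r ⊆ C ∩ uSphere d}.Nonempty := by
      by_contra hempty
      rw [rcent, Set.not_nonempty_iff_eq_empty.1 hempty, Real.sSup_empty] at hr
      exact ha.not_ge hr
    obtain ⟨s, hs, hrs⟩ := exists_lt_of_lt_csSup hne (hra.trans_le hr)
    exact ⟨s, hrs, hs.2.trans Set.inter_subset_left⟩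
  have hC : ∀ x : Esp d, Real.cos a * ‖x‖ < ⟪x, e⟫ → x ∈ C := fun x =>
    mem_cone_of_lt_inner he1 ha ha' hcone hr'
  have hcap : cap e a ⊆ C ∩ uSphere d := fun x hx =>
    ⟨cap_subset_cone he1 ha ha' hclosed hC hx, hx.1⟩
  have hhit : sigmaMeas d {x | ∃ y ∈ cap e a, ⟪x - e, y⟫ = 0} = sigmaMeas d (cap e (2 * a)) := by
    rw [sigmaMeas, Measure.restrict_apply' (measurableSet_uSphere d),
      hitting_cap_inter_uSphere he1 ha ha', Measure.restrict_apply' (measurableSet_uSphere d),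
      Set.inter_eq_left.2 fun x hx => hx.1]
  have hmono : sigmaMeas d {x | ∃ y ∈ cap e a, ⟪x - e, y⟫ = 0} ≤
      sigmaMeas d {x | ∃ y ∈ C ∩ uSphere d, ⟪x - e, y⟫ = 0} :=
    measure_mono fun x ⟨y, hy, hxy⟩ => ⟨y, hcap hy, hxy⟩
  refine ⟨ENNReal.toReal_mono (sigmaMeas_lt_top d _).ne hmono, congrArg ENNReal.toReal hhit,
    fun heq => ?_, fun h => by rw [h]⟩
  by_contra hne
  obtain ⟨y, hyK, hycap⟩ := Set.not_subset.1 fun h => hne (h.antisymm hcap)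
  have hy1 : ‖y‖ = 1 := mem_uSphere.1 hyK.2
  have hye : ⟪y, e⟫ < Real.cos a * ‖y‖ := by
    rw [mem_cap_iff he1 ha.le (by linarith), not_and, not_le] at hycap
    simpa [hy1] using hycap hy1
  obtain ⟨z, hz, hz0, hza⟩ :=
    exists_mem_interior_inner_lt he1 hcos1 hconv hcone hC hyK.1 (hhemi y hyK) hye
  obtain ⟨x, hx1, hxC, hx0, hxa⟩ := exists_unit_add_mem_interior he1 hcone hz hz0 hza
  set U : Set (Esp d) := {x | x + e ∈ interior C ∧ 0 < ‖x + e‖ ∧ ⟪x, e⟫ < Real.cos (2 * a)}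
  have hUo : IsOpen U := by
    have h₁ : IsOpen {x : Esp d | 0 < ‖x + e‖} := isOpen_lt (by fun_prop) (by fun_prop)
    have h₂ : IsOpen {x : Esp d | ⟪x, e⟫ < Real.cos (2 * a)} :=
      isOpen_lt (by fun_prop) (by fun_prop)
    exact (isOpen_interior.preimage (f := fun x : Esp d => x + e) (by fun_prop)).inter
      (h₁.inter h₂)
  have hUpos : 0 < sigmaMeas d (U ∩ uSphere d) := by
    rw [sigmaMeas, Measure.restrict_apply' (measurableSet_uSphere d), Set.inter_assoc,
      Set.inter_self]
    exact hausdorffMeasure_inter_sphere_pos (by simp) (hUo.mem_nhds ⟨hxC, hx0, hxa⟩) hx1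
  have hdisj : Disjoint (cap e (2 * a)) (U ∩ uSphere d) := by
    rw [Set.disjoint_left]
    intro w hw hwU
    rw [mem_cap_iff he1 (by linarith) (by linarith)] at hw
    exact hw.2.not_gt hwU.1.2.2
  have hsub : cap e (2 * a) ∪ (U ∩ uSphere d) ⊆
      {x | ∃ y ∈ C ∩ uSphere d, ⟪x - e, y⟫ = 0} := by
    rintro w (hw | ⟨⟨hwC, hw0, -⟩, hw1⟩)
    · rw [← hitting_cap_inter_uSphere he1 ha ha'] at hw
      obtain ⟨⟨y, hy, hwy⟩, -⟩ := hw
      exact ⟨y, hcap hy, hwy⟩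
    · refine ⟨‖w + e‖⁻¹ • (w + e), ⟨hcone _ (interior_subset hwC) _ (by positivity),
        mem_uSphere.2 ?_⟩, ?_⟩
      · rw [norm_smul, norm_inv, norm_norm, inv_mul_cancel₀ hw0.ne']
      · rw [real_inner_smul_right, inner_sub_add_of_unit he1 (mem_uSphere.1 hw1), mul_zero]
  have hle := measure_mono (μ := sigmaMeas d) hsub
  rw [measure_union hdisj (hUo.measurableSet.inter (measurableSet_uSphere d))] at hle
  have heq' := (ENNReal.toReal_eq_toReal_iff' (sigmaMeas_lt_top d _).ne
    (sigmaMeas_lt_top d _).ne).1 heq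
  rw [heq', hhit] at hle
  exact (ENNReal.lt_add_right (sigmaMeas_lt_top d _).ne hUpos.ne').not_ge hle

end
end

section
/- Let e ∈ S^d, a ∈ (0,π/2), ε ∈ (0,1], and let K ∈ 𝒦̄_s^d satisfy e ∈ K ⊆ H_e^+, r_e(K) ≥ a and R_e(K) − r_e(K) ≥ ε. Then Ũ_e(K) ≥ [1 + c(a,d)·ε^{(d+1)/2}]·Ũ_e(B(e,a)), where c(a,d) can be taken ≥ (2π)^{−2d}·a^{−1}·(min{a, π/2 − a})^{d−1}. -/
open Real MeasureTheory Filter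
open scoped RealInnerProductSpace ENNReal NNReal Topology

noncomputable section

/-- Inverse stereographic projection from the pole `-e`, as a map on vectors orthogonal to `e`. -/
def stereoInv {V : Type*} [NormedAddCommGroup V] [InnerProductSpace ℝ V] (e p : V) : V :=
  ((1 - ‖p‖ ^ 2) / (1 + ‖p‖ ^ 2)) • e + (2 / (1 + ‖p‖ ^ 2)) • p

section Stereographic

variable {V : Type*} [NormedAddCommGroup V] [InnerProductSpace ℝ V] {e p q : V}

lemma inner_stereoInv_stereoInv (he : ‖e‖ = 1) (hp : ⟪p, e⟫ = 0) (hq : ⟪q, e⟫ = 0) :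
    ⟪stereoInv e p, stereoInv e q⟫ * ((1 + ‖p‖ ^ 2) * (1 + ‖q‖ ^ 2)) =
      (1 - ‖p‖ ^ 2) * (1 - ‖q‖ ^ 2) + 4 * ⟪p, q⟫ := by
  have hq' : ⟪e, q⟫ = 0 := by rw [real_inner_comm, hq]
  have h1 : (1 + ‖p‖ ^ 2) ≠ 0 := by positivity
  have h2 : (1 + ‖q‖ ^ 2) ≠ 0 := by positivity
  simp only [stereoInv, inner_add_left, inner_add_right, real_inner_smul_left,
    real_inner_smul_right, hp, hq', real_inner_self_eq_norm_sq, he]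
  field_simp
  ring

lemma norm_stereoInv (he : ‖e‖ = 1) (hp : ⟪p, e⟫ = 0) : ‖stereoInv e p‖ = 1 := by
  have h := inner_stereoInv_stereoInv he hp hp
  rw [real_inner_self_eq_norm_sq, real_inner_self_eq_norm_sq] at h
  have h1 : 0 < (1 + ‖p‖ ^ 2) * (1 + ‖p‖ ^ 2) := by positivity
  have h2 : ‖stereoInv e p‖ ^ 2 = 1 := by
    apply mul_right_cancel₀ h1.ne'
    rw [h]; ring
  exact (sq_eq_sq₀ (norm_nonneg _) zero_le_one).1 (by simpa using h2)

lemma norm_stereoInv_sub_sq (he : ‖e‖ = 1) (hp : ⟪p, e⟫ = 0) (hq : ⟪q, e⟫ = 0) :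
    ‖stereoInv e p - stereoInv e q‖ ^ 2 * ((1 + ‖p‖ ^ 2) * (1 + ‖q‖ ^ 2)) =
      4 * ‖p - q‖ ^ 2 := by
  have h := inner_stereoInv_stereoInv he hp hq
  rw [norm_sub_sq_real, norm_sub_sq_real, norm_stereoInv he hp, norm_stereoInv he hq]
  linear_combination (-2) * h

lemma norm_stereoInv_sub_le (he : ‖e‖ = 1) (hp : ⟪p, e⟫ = 0) (hq : ⟪q, e⟫ = 0) :
    ‖stereoInv e p - stereoInv e q‖ ≤ 2 * ‖p - q‖ := by
  have h := norm_stereoInv_sub_sq he hp hq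
  refine (sq_le_sq₀ (norm_nonneg _) (by positivity)).1 ?_
  have h1 : 1 ≤ (1 + ‖p‖ ^ 2) * (1 + ‖q‖ ^ 2) := by
    nlinarith [sq_nonneg ‖p‖, sq_nonneg ‖q‖, mul_nonneg (sq_nonneg ‖p‖) (sq_nonneg ‖q‖)]
  have := le_mul_of_one_le_right (sq_nonneg ‖stereoInv e p - stereoInv e q‖) h1
  linarith [mul_pow 2 ‖p - q‖ 2]

lemma norm_sub_le_stereoInv {M : ℝ} (he : ‖e‖ = 1) (hp : ⟪p, e⟫ = 0) (hq : ⟪q, e⟫ = 0)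
    (hpM : ‖p‖ ^ 2 ≤ M ^ 2) (hqM : ‖q‖ ^ 2 ≤ M ^ 2) :
    ‖p - q‖ ≤ (1 + M ^ 2) / 2 * ‖stereoInv e p - stereoInv e q‖ := by
  have h := norm_stereoInv_sub_sq he hp hq
  refine (sq_le_sq₀ (norm_nonneg _) (by positivity)).1 ?_
  have h1 : (1 + ‖p‖ ^ 2) * (1 + ‖q‖ ^ 2) ≤ (1 + M ^ 2) * (1 + M ^ 2) := by gcongr
  have := mul_le_mul_of_nonneg_left h1 (sq_nonneg ‖stereoInv e p - stereoInv e q‖)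
  rw [mul_pow, div_pow]
  linarith

lemma inner_stereoInv_sub (y : V) :
    ⟪stereoInv e p - e, y⟫ * (1 + ‖p‖ ^ 2) = 2 * (⟪p, y⟫ - ‖p‖ ^ 2 * ⟪e, y⟫) := by
  have h1 : (1 + ‖p‖ ^ 2) ≠ 0 := by positivity
  simp only [stereoInv, inner_add_left, inner_sub_left, real_inner_smul_left]
  field_simp
  ring

/-- The stereographic preimage of `x ≠ -e`. -/
lemma exists_stereoInv_eq {x : V} (he : ‖e‖ = 1) (hx : ‖x‖ = 1) (hxe : -1 < ⟪x, e⟫) :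
    ∃ p : V, ⟪p, e⟫ = 0 ∧ stereoInv e p = x ∧
      ‖p‖ ^ 2 * (1 + ⟪x, e⟫) = 1 - ⟪x, e⟫ := by
  set t := ⟪x, e⟫ with ht
  have h1 : 0 < 1 + t := by linarith
  have hn : ‖x - t • e‖ ^ 2 = 1 - t ^ 2 := by
    rw [norm_sub_sq_real, real_inner_smul_right, norm_smul, he, hx, ← ht, mul_one,
      Real.norm_eq_abs, sq_abs]
    ring
  have hp : ‖(1 + t)⁻¹ • (x - t • e)‖ ^ 2 = (1 - t) / (1 + t) := by
    rw [norm_smul, mul_pow, hn, Real.norm_eq_abs, sq_abs]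
    field_simp
    ring
  refine ⟨(1 + t)⁻¹ • (x - t • e), ?_, ?_, ?_⟩
  · rw [real_inner_smul_left, inner_sub_left, real_inner_smul_left,
      real_inner_self_eq_norm_sq, he, ← ht]
    ring
  · rw [stereoInv, hp]
    have e1 : (1 - (1 - t) / (1 + t)) / (1 + (1 - t) / (1 + t)) = t := by
      have : 1 + t + (1 - t) ≠ 0 := by norm_num
      field_simp
      ring
    have e2 : 2 / (1 + (1 - t) / (1 + t)) = 1 + t := by
      have : 1 + t + (1 - t) ≠ 0 := by norm_num
      field_simp
      ring
    rw [e1, e2, smul_smul, mul_inv_cancel₀ h1.ne', one_smul]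
    abel
  · rw [hp]; field_simp

/-- If `x` is a unit vector, and the cone `C` contains `e` and a vector `y` on which `x - e` is
nonnegative, then the hyperplane orthogonal to `x - e` meets `C` in a unit vector. -/
lemma exists_unit_mem_inner_eq_zero {C : Set V} (hconv : Convex ℝ C)
    (hcone : ∀ x ∈ C, ∀ t : ℝ, 0 ≤ t → t • x ∈ C) (he : ‖e‖ = 1) (heC : e ∈ C)
    {x y : V} (hx : ‖x‖ = 1) (hyC : y ∈ C) (hy : ‖y‖ = 1) (hye : 0 ≤ ⟪y, e⟫)
    (hxy : 0 ≤ ⟪x - e, y⟫) : ∃ w ∈ C, ‖w‖ = 1 ∧ ⟪x - e, w⟫ = 0 := by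
  rcases hxy.eq_or_lt with h | hβ
  · exact ⟨y, hyC, hy, h.symm⟩
  set α := -⟪x - e, e⟫ with hα
  set β := ⟪x - e, y⟫ with hβd
  have hα0 : 0 ≤ α := by
    have h1 : ⟪x - e, e⟫ = ⟪x, e⟫ - 1 := by
      rw [inner_sub_left, real_inner_self_eq_norm_sq, he]; norm_num
    have h2 := real_inner_le_norm x e
    rw [hx, he] at h2
    linarith
  set w := β • e + α • y with hw
  have hwC : w ∈ C := by
    have h2 : (0 : ℝ) < β + α := by positivity
    have := hcone _ (hconv heC hyC (div_nonneg hβ.le h2.le) (div_nonneg hα0 h2.le)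
      (by field_simp)) (β + α) h2.le
    rwa [smul_add, smul_smul, smul_smul, mul_div_cancel₀ _ h2.ne',
      mul_div_cancel₀ _ h2.ne'] at this
  have hwe : 0 < ⟪w, e⟫ := by
    rw [hw, inner_add_left, real_inner_smul_left, real_inner_smul_left,
      real_inner_self_eq_norm_sq, he]
    have := mul_nonneg hα0 hye
    linarith
  have hw0 : ‖w‖ ≠ 0 := by
    rw [norm_ne_zero_iff]
    rintro h
    rw [h, inner_zero_left] at hwe
    exact hwe.false
  refine ⟨‖w‖⁻¹ • w, hcone _ hwC _ (by positivity), ?_, ?_⟩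
  · rw [norm_smul, norm_inv, norm_norm, inv_mul_cancel₀ hw0]
  · rw [real_inner_smul_right, hw, inner_add_right, real_inner_smul_right,
      real_inner_smul_right, ← hβd]
    have : ⟪x - e, e⟫ = -α := by rw [hα, neg_neg]
    rw [this]; ring

end Stereographic

section MeasureBounds

variable {d : ℕ} {e : Esp d} {ι : EuclideanSpace ℝ (Fin d) →ₗᵢ[ℝ] Esp d}

instance isAddHaarMeasure_hausdorffMeasure_euclideanSpace (d : ℕ) :
    (μH[(d : ℝ)] : Measure (EuclideanSpace ℝ (Fin d))).IsAddHaarMeasure := by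
  simpa using MeasureTheory.isAddHaarMeasure_hausdorffMeasure (E := EuclideanSpace ℝ (Fin d))

lemma exists_linearIsometry_onto_orthogonal (he : ‖e‖ = 1) :
    ∃ ι : EuclideanSpace ℝ (Fin d) →ₗᵢ[ℝ] Esp d,
      (∀ p, ⟪ι p, e⟫ = 0) ∧ ∀ x, ⟪x, e⟫ = 0 → ∃ p, ι p = x := by
  have he0 : e ≠ 0 := by
    rintro rfl
    simp at he
  have : Fact (Module.finrank ℝ (Esp d) = d + 1) := ⟨by simp⟩
  have hf : Module.finrank ℝ (ℝ ∙ e)ᗮ = d := Submodule.finrank_orthogonal_span_singleton he0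
  let b := (stdOrthonormalBasis ℝ (ℝ ∙ e)ᗮ).reindex (finCongr hf)
  refine ⟨(Submodule.subtypeₗᵢ _).comp b.repr.symm.toLinearIsometry, fun p => ?_, fun x hx => ?_⟩
  · have := (b.repr.symm p).2
    rw [Submodule.mem_orthogonal_singleton_iff_inner_left] at this
    exact this
  · refine ⟨b.repr ⟨x, Submodule.mem_orthogonal_singleton_iff_inner_left.2 hx⟩, ?_⟩
    simp

lemma lipschitzWith_stereoInv (he : ‖e‖ = 1) (hι : ∀ p, ⟪ι p, e⟫ = 0) :
    LipschitzWith 2 (fun p => stereoInv e (ι p)) :=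
  LipschitzWith.of_dist_le_mul fun p q => by
    simpa [dist_eq_norm, ← map_sub] using norm_stereoInv_sub_le he (hι p) (hι q)

lemma injective_stereoInv (he : ‖e‖ = 1) (hι : ∀ p, ⟪ι p, e⟫ = 0) :
    Function.Injective (fun p => stereoInv e (ι p)) := by
  intro p q h
  have := norm_stereoInv_sub_sq he (hι p) (hι q)
  rw [show stereoInv e (ι p) = stereoInv e (ι q) from h, sub_self, ← map_sub,
    LinearIsometry.norm_map ι (p - q), norm_zero, zero_pow two_ne_zero, zero_mul] at this
  have h0 : ‖p - q‖ ^ 2 = 0 := by linarith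
  exact sub_eq_zero.1 (norm_eq_zero.1 (pow_eq_zero_iff two_ne_zero |>.1 h0))

lemma hausdorffMeasure_stereoInv_image_le (he : ‖e‖ = 1) (hι : ∀ p, ⟪ι p, e⟫ = 0)
    (s : Set (EuclideanSpace ℝ (Fin d))) :
    μH[(d : ℝ)] ((fun p => stereoInv e (ι p)) '' s) ≤ ENNReal.ofReal (2 ^ d) * μH[(d : ℝ)] s := by
  have := (lipschitzWith_stereoInv he hι).hausdorffMeasure_image_le (Nat.cast_nonneg d) s
  rw [ENNReal.rpow_natCast] at this
  rw [ENNReal.ofReal_pow zero_le_two]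
  simpa using this

lemma hausdorffMeasure_le_stereoInv_image {M : ℝ} (he : ‖e‖ = 1) (hι : ∀ p, ⟪ι p, e⟫ = 0)
    {s : Set (EuclideanSpace ℝ (Fin d))} (hs : ∀ p ∈ s, ‖p‖ ^ 2 ≤ M ^ 2) :
    μH[(d : ℝ)] s ≤
      ENNReal.ofReal (((1 + M ^ 2) / 2) ^ d) *
        μH[(d : ℝ)] ((fun p => stereoInv e (ι p)) '' s) := by
  set f := fun p => stereoInv e (ι p)
  have hM : 0 ≤ (1 + M ^ 2) / 2 := by positivity
  have hinv := Function.leftInverse_invFun (injective_stereoInv he hι)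
  have hL : LipschitzOnWith ((1 + M ^ 2) / 2).toNNReal (Function.invFun f) (f '' s) := by
    refine LipschitzOnWith.of_dist_le_mul ?_
    rintro _ ⟨p, hp, rfl⟩ _ ⟨q, hq, rfl⟩
    rw [hinv p, hinv q, Real.coe_toNNReal _ hM, dist_eq_norm, dist_eq_norm, ← ι.norm_map, map_sub]
    exact norm_sub_le_stereoInv he (hι p) (hι q) (by simpa using hs p hp) (by simpa using hs q hq)
  have := hL.hausdorffMeasure_image_le (Nat.cast_nonneg d)
  rwa [← Set.image_comp, hinv.comp_eq_id, Set.image_id, ENNReal.rpow_natCast,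
    ← ENNReal.ofReal, ← ENNReal.ofReal_pow hM] at this

lemma hausdorffMeasure_uSphere_le (he : ‖e‖ = 1) (hι : ∀ p, ⟪ι p, e⟫ = 0)
    (hsurj : ∀ x, ⟪x, e⟫ = 0 → ∃ p, ι p = x) :
    μH[(d : ℝ)] (uSphere d) ≤ ENNReal.ofReal (2 ^ (d + 1)) *
      μH[(d : ℝ)] (Metric.ball (0 : EuclideanSpace ℝ (Fin d)) 1) := by
  set H := (fun p => stereoInv e (ι p)) '' Metric.closedBall 0 1
  have hmem : ∀ x : Esp d, ‖x‖ = 1 → 0 ≤ ⟪x, e⟫ → x ∈ H := by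
    intro x hx hxe
    obtain ⟨p, hpe, hpx, hp⟩ := exists_stereoInv_eq he hx (by linarith)
    obtain ⟨q, rfl⟩ := hsurj p hpe
    refine ⟨q, ?_, hpx⟩
    rw [ι.norm_map] at hp
    rw [mem_closedBall_zero_iff]
    nlinarith [norm_nonneg q, mul_nonneg (sq_nonneg ‖q‖) hxe]
  have hsub : uSphere d ⊆ H ∪ (fun x => -x) '' H := by
    intro x hx
    have hx' : ‖x‖ = 1 := by simpa [uSphere] using hx
    rcases le_total 0 ⟪x, e⟫ with h | h
    · exact Or.inl (hmem x hx' h)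
    · refine Or.inr ⟨-x, hmem (-x) (by simpa) (by simpa [inner_neg_left] using h), neg_neg x⟩
  have hHle : μH[(d : ℝ)] H ≤ ENNReal.ofReal (2 ^ d) *
      μH[(d : ℝ)] (Metric.ball (0 : EuclideanSpace ℝ (Fin d)) 1) := by
    have := hausdorffMeasure_stereoInv_image_le he hι (Metric.closedBall 0 1)
    rwa [Measure.addHaar_closedBall _ _ zero_le_one, one_pow, ENNReal.ofReal_one, one_mul] at this
  have hneg : μH[(d : ℝ)] ((fun x => -x) '' H) = μH[(d : ℝ)] H :=
    (LinearIsometryEquiv.neg ℝ : Esp d ≃ₗᵢ[ℝ] Esp d).isometry.hausdorffMeasure_image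
      (Or.inl (Nat.cast_nonneg d)) H
  calc μH[(d : ℝ)] (uSphere d) ≤ μH[(d : ℝ)] H + μH[(d : ℝ)] ((fun x => -x) '' H) :=
        (measure_mono hsub).trans (measure_union_le _ _)
    _ ≤ _ := by
        rw [hneg, ← two_mul, pow_succ', ENNReal.ofReal_mul zero_le_two, mul_assoc]
        simpa using mul_le_mul_right hHle 2

/-- The measure of an ellipsoid of revolution with semi-axis `A` in direction `v` and `ρ` in the
directions orthogonal to `v`, expressed as an affine image of the unit ball. -/
lemma hausdorffMeasure_ellipsoid (hd : 1 ≤ d) {v : EuclideanSpace ℝ (Fin d)} (hv : ‖v‖ = 1)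
    {A ρ : ℝ} (hA : 0 < A) (hρ : 0 < ρ) (c : ℝ) :
    μH[(d : ℝ)] ((fun w => (c + (A - ρ) * ⟪v, w⟫) • v + ρ • w) '' Metric.ball 0 1) =
      ENNReal.ofReal (A * ρ ^ (d - 1)) *
        μH[(d : ℝ)] (Metric.ball (0 : EuclideanSpace ℝ (Fin d)) 1) := by
  let L := ρ • LinearMap.transvection ((A / ρ - 1) • (innerSL ℝ v).toLinearMap) v
  have hL : ∀ w, (c + (A - ρ) * ⟪v, w⟫) • v + ρ • w = c • v + L w := by
    intro w
    simp only [L, LinearMap.smul_apply, LinearMap.transvection.apply, smul_add, add_smul,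
      smul_smul, smul_eq_mul, ContinuousLinearMap.coe_coe, innerSL_apply_apply]
    rw [show ρ * ((A / ρ - 1) * ⟪v, w⟫) = (A - ρ) * ⟪v, w⟫ by field_simp]
    abel
  have hdet : LinearMap.det L = A * ρ ^ (d - 1) := by
    obtain ⟨k, rfl⟩ := Nat.exists_eq_add_of_le' hd
    simp only [L, LinearMap.det_smul, finrank_euclideanSpace, Fintype.card_fin,
      LinearMap.transvection.det, LinearMap.smul_apply, ContinuousLinearMap.coe_coe,
      innerSL_apply_apply, real_inner_self_eq_norm_sq, hv, smul_eq_mul, Nat.add_sub_cancel]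
    field_simp
    ring
  have himg : (fun w => (c + (A - ρ) * ⟪v, w⟫) • v + ρ • w) '' Metric.ball 0 1 =
      (fun w => c • v + w) '' (L '' Metric.ball 0 1) := by
    rw [Set.image_image]
    exact Set.image_congr fun w _ => hL w
  rw [himg, Set.image_add_left, measure_preimage_add, Measure.addHaar_image_linearMap, hdet,
    abs_of_pos (by positivity)]

/-- Every point of the ellipsoid lies in the ball with diameter `[0, Z • v]` and outside the ball
of radius `T` about the origin. -/
lemma ellipsoid_subset {F : Type*} [NormedAddCommGroup F] [InnerProductSpace ℝ F]
    {v w : F} (hv : ‖v‖ = 1) (hw : ‖w‖ < 1) {T Z A ρ c : ℝ} (hT : 0 < T) (hTZ : T < Z)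
    (hA : A = (Z - T) / 4) (hρ : ρ ^ 2 = T * (Z - T) / 2) (hc : c = (3 * T + Z) / 4)
    {p : F} (hp : p = (c + (A - ρ) * ⟪v, w⟫) • v + ρ • w) :
    T ^ 2 < ‖p‖ ^ 2 ∧ ‖p‖ ^ 2 ≤ Z * ⟪p, v⟫ ∧ ‖p‖ ^ 2 ≤ Z ^ 2 := by
  set t := ⟪v, w⟫ with ht
  have hwv : ⟪w, v⟫ = t := real_inner_comm _ _
  have ht1 : |t| < 1 := by
    have := abs_real_inner_le_norm v w
    rw [hv, one_mul] at this
    exact this.trans_lt hw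
  obtain ⟨h1, h2⟩ := abs_lt.1 ht1
  set s := c + A * t with hs
  have hpv : ⟪p, v⟫ = s := by
    rw [hp, inner_add_left, real_inner_smul_left, real_inner_smul_left,
      real_inner_self_eq_norm_sq, hv, hwv]
    ring
  have hpp : ‖p‖ ^ 2 = s ^ 2 + ρ ^ 2 * (‖w‖ ^ 2 - t ^ 2) := by
    rw [hp, norm_add_sq_real, norm_smul, norm_smul, real_inner_smul_left, real_inner_smul_right,
      mul_pow, mul_pow, Real.norm_eq_abs, Real.norm_eq_abs, sq_abs, sq_abs, hv, ← ht]
    ring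
  have hAp : 0 < A := by rw [hA]; linarith
  have hsT : T < s := by
    have : A * (-1) < A * t := by gcongr
    rw [hs, hc]; linarith
  have hsZ : s < (T + Z) / 2 := by
    have : A * t < A * 1 := by gcongr
    rw [hs, hc]; linarith
  have hw2 : ‖w‖ ^ 2 ≤ 1 := pow_le_one₀ (norm_nonneg _) hw.le
  have ht2 : t ^ 2 ≤ ‖w‖ ^ 2 := by
    have := abs_real_inner_le_norm v w
    rw [hv, one_mul] at this
    exact sq_le_sq' (by linarith [(abs_le.1 this).1]) (abs_le.1 this).2
  have hle : ‖p‖ ^ 2 ≤ Z * s := by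
    have : ρ ^ 2 * (‖w‖ ^ 2 - t ^ 2) ≤ ρ ^ 2 * 1 := by
      gcongr
      linarith [sq_nonneg t]
    have h3 : T * ((Z - T) / 2) ≤ s * (Z - s) := by gcongr <;> linarith
    rw [hpp]
    linarith
  refine ⟨?_, by rwa [hpv], hle.trans ?_⟩
  · have h3 : 0 ≤ ρ ^ 2 * (‖w‖ ^ 2 - t ^ 2) := mul_nonneg (sq_nonneg _) (by linarith)
    have h4 : T ^ 2 < s ^ 2 := by gcongr
    linarith
  · rw [sq]
    gcongr <;> linarith

end MeasureBounds

section NumericBounds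

lemma min_mul_le_sin_mul_cos {a : ℝ} (ha : 0 < a) (ha' : a < π / 2) :
    2 / π * min a (π / 2 - a) ≤ Real.sin a * Real.cos a := by
  have h2 : Real.sin (2 * min a (π / 2 - a)) = 2 * Real.sin a * Real.cos a := by
    rcases min_choice a (π / 2 - a) with h | h
    · rw [h, Real.sin_two_mul]
    · rw [h, ← Real.sin_two_mul, ← Real.sin_pi_sub]
      congr 1; ring
  have hm0 : 0 < min a (π / 2 - a) := lt_min ha (by linarith)
  have hm1 : min a (π / 2 - a) ≤ π / 4 := by
    rcases le_total a (π / 4) with h | h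
    · exact (min_le_left _ _).trans h
    · exact (min_le_right _ _).trans (by linarith)
  have := Real.mul_le_sin (x := 2 * min a (π / 2 - a)) (by linarith) (by linarith)
  linarith

lemma half_cos_le_cos_add {a δ : ℝ} (ha : 0 < a) (hδ : 0 < δ) (hδa : 2 * δ ≤ π / 2 - a) :
    Real.cos a / 2 ≤ Real.cos (a + δ) := by
  have h1 : Real.cos (a + δ) = Real.sin ((π / 2 - a) - δ) := by
    rw [← Real.cos_pi_div_two_sub]; congr 1; ring
  have h2 : Real.cos a = 2 * Real.sin ((π / 2 - a) / 2) * Real.cos ((π / 2 - a) / 2) := by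
    rw [← Real.sin_two_mul, ← Real.cos_pi_div_two_sub]; congr 1; ring
  have h3 : Real.sin ((π / 2 - a) / 2) ≤ Real.sin ((π / 2 - a) - δ) :=
    Real.sin_le_sin_of_le_of_le_pi_div_two (by linarith) (by linarith) (by linarith)
  have h4 : 0 ≤ Real.sin ((π / 2 - a) / 2) :=
    Real.sin_nonneg_of_nonneg_of_le_pi (by linarith) (by linarith)
  have h5 := mul_le_mul_of_nonneg_left (Real.cos_le_one ((π / 2 - a) / 2)) h4
  rw [h1, h2]
  linarith

lemma rpow_half_eq {d : ℕ} (hd : 1 ≤ d) {ε : ℝ} (hε : 0 < ε) :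
    ε ^ (((d : ℝ) + 1) / 2) = ε * (√ε) ^ (d - 1) := by
  obtain ⟨k, rfl⟩ := Nat.exists_eq_add_of_le' hd
  rw [Nat.add_sub_cancel, Real.sqrt_eq_rpow, ← Real.rpow_natCast, ← Real.rpow_mul hε.le]
  nth_rewrite 2 [← Real.rpow_one ε]
  rw [← Real.rpow_add hε]
  congr 1
  push_cast
  ring

lemma stability_constant_le {d : ℕ} (hd : 2 ≤ d) {a m ε s : ℝ} (ha : 0 < a) (hm : 0 ≤ m)
    (hε : 0 ≤ ε) (hs : 0 ≤ s) :
    ((2 * π) ^ (2 * d))⁻¹ * a⁻¹ * m ^ (d - 1) * (ε * s ^ (d - 1)) * (2 ^ (d + 1) * (4 * a / π)) ≤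
      ε / (4 * π) * (m * s / (2 * π)) ^ (d - 1) := by
  obtain ⟨k, rfl⟩ := Nat.exists_eq_add_of_le' hd
  have hpi := Real.pi_gt_three
  have hpi0 := Real.pi_pos
  have h27 : 16 ≤ π ^ (k + 3) :=
    calc (16 : ℝ) ≤ 3 ^ 3 := by norm_num
      _ ≤ 3 ^ (k + 3) := pow_le_pow_right₀ (by norm_num) (by omega)
      _ ≤ π ^ (k + 3) := by gcongr
  have key : ((2 * π) ^ (2 * (k + 2)))⁻¹ * (2 ^ (k + 2 + 1) * (4 / π)) ≤
      1 / (4 * π) * ((2 * π) ^ (k + 1))⁻¹ := by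
    have h1 : (2 * π) ^ (2 * (k + 2)) = (2 * π) ^ (k + 1) * (2 ^ (k + 3) * π ^ (k + 3)) := by
      rw [← mul_pow, ← pow_add]; congr 1; ring
    rw [h1]
    field_simp
    linarith
  have e1 : k + 2 - 1 = k + 1 := rfl
  rw [e1]
  calc _ = ε * (m ^ (k + 1) * s ^ (k + 1)) *
        (((2 * π) ^ (2 * (k + 2)))⁻¹ * (2 ^ (k + 2 + 1) * (4 / π))) := by
        field_simp
    _ ≤ ε * (m ^ (k + 1) * s ^ (k + 1)) * (1 / (4 * π) * ((2 * π) ^ (k + 1))⁻¹) := by gcongr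
    _ = _ := by rw [div_pow, mul_pow m]; field_simp

/-- The explicit constant is dominated by the volume of the ellipsoid times the conformal
factor of the stereographic projection. -/
lemma stability_numeric_bound {d : ℕ} (hd : 2 ≤ d) {a ε T Z ρ : ℝ} (ha : 0 < a) (hε : 0 < ε)
    (hεa : ε ≤ π / 2 - a) (hT : T = Real.tan a) (hZ : Z = Real.tan (a + ε / 2)) (hρ0 : 0 < ρ)
    (hρ : ρ ^ 2 = T * (Z - T) / 2) :
    ((2 * π) ^ (2 * d))⁻¹ * a⁻¹ * (min a (π / 2 - a)) ^ (d - 1) * ε ^ (((d : ℝ) + 1) / 2) *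
        (2 ^ (d + 1) * (4 * a / π)) * ((1 + Z ^ 2) / 2) ^ d ≤
      (Z - T) / 4 * ρ ^ (d - 1) := by
  have hpi := Real.pi_pos
  have hm0 : 0 < min a (π / 2 - a) := lt_min ha (by linarith)
  have hm1 : min a (π / 2 - a) ≤ 2 := (min_le_right _ _).trans (by linarith [Real.pi_lt_four])
  have hsc := min_mul_le_sin_mul_cos ha (by linarith)
  have hcR := half_cos_le_cos_add ha (half_pos hε) (by linarith)
  have hsδ := Real.mul_le_sin (x := ε / 2) (by linarith) (by linarith)
  set m := min a (π / 2 - a)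
  set R := a + ε / 2 with hR
  have hca : 0 < Real.cos a := Real.cos_pos_of_mem_Ioo ⟨by linarith, by linarith⟩
  have hcR0 : 0 < Real.cos R := by linarith
  have hZT : Z - T = Real.sin (ε / 2) / (Real.cos a * Real.cos R) := by
    have : Real.sin (ε / 2) = Real.sin R * Real.cos a - Real.cos R * Real.sin a := by
      rw [← Real.sin_sub]; congr 1; rw [hR]; ring
    rw [hZ, hT, Real.tan_eq_sin_div_cos, Real.tan_eq_sin_div_cos, this]
    field_simp
  have hgZ : (1 + Z ^ 2) / 2 = 1 / (2 * Real.cos R ^ 2) := by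
    rw [hZ, Real.tan_eq_sin_div_cos]
    field_simp
    linarith [Real.sin_sq_add_cos_sq R]
  set g := 2 * Real.cos R ^ 2 with hg
  have hg0 : 0 < g := by positivity
  have hsa : 0 < Real.sin a := Real.sin_pos_of_pos_of_lt_pi ha (by linarith)
  have hs0 : ε / π ≤ Real.sin (ε / 2) := by
    rw [show ε / π = 2 / π * (ε / 2) by ring]; exact hsδ
  have hsp : 0 < Real.sin (ε / 2) := lt_of_lt_of_le (by positivity) hs0
  have hgA : ε / (4 * π) ≤ g * ((Z - T) / 4) := by
    have : g * ((Z - T) / 4) = Real.cos R / Real.cos a * (Real.sin (ε / 2) / 2) := by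
      rw [hZT, hg]; field_simp; norm_num
    rw [this]
    have h1 : 1 / 2 ≤ Real.cos R / Real.cos a := by
      rw [le_div_iff₀ hca]; linarith
    calc ε / (4 * π) = 1 / 2 * (ε / π / 2) := by field_simp; norm_num
      _ ≤ _ := by gcongr
  have hgρ : m * √ε / (2 * π) ≤ g * ρ := by
    refine (sq_le_sq₀ (by positivity) (by positivity)).1 ?_
    have h1 : (g * ρ) ^ 2 =
        2 * (Real.cos R / Real.cos a) ^ 2 * Real.cos R * Real.sin a * Real.sin (ε / 2) := by
      rw [mul_pow, hρ, hZT, hT, Real.tan_eq_sin_div_cos, hg]; field_simp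
    have h2 : 1 / 2 ≤ Real.cos R / Real.cos a := by
      rw [le_div_iff₀ hca]; linarith
    have h3 : 2 * (1 / 2) ^ 2 * (Real.cos a / 2) * Real.sin a * (ε / π) ≤ (g * ρ) ^ 2 := by
      rw [h1]; gcongr
    refine le_trans ?_ h3
    rw [div_pow, mul_pow, Real.sq_sqrt hε.le]
    calc m ^ 2 * ε / (2 * π) ^ 2 = m * m * ε / (4 * π ^ 2) := by ring
      _ ≤ 2 * m * ε / (4 * π ^ 2) := by gcongr
      _ = 1 / 4 * (2 / π * m) * (ε / π) := by field_simp
      _ ≤ 1 / 4 * (Real.sin a * Real.cos a) * (ε / π) := by gcongr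
      _ = _ := by ring
  rw [hgZ, rpow_half_eq (by omega) hε, one_div, inv_pow, ← div_eq_mul_inv,
    div_le_iff₀ (by positivity)]
  refine (stability_constant_le hd ha hm0.le hε.le (Real.sqrt_nonneg ε)).trans ?_
  have h4 : (Z - T) / 4 * ρ ^ (d - 1) * g ^ d = g * ((Z - T) / 4) * (g * ρ) ^ (d - 1) := by
    obtain ⟨k, rfl⟩ := Nat.exists_eq_add_of_le' (show 1 ≤ d by omega)
    rw [Nat.add_sub_cancel, mul_pow, pow_succ]; ring
  have h5 : 0 ≤ g * ((Z - T) / 4) := le_trans (by positivity) hgA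
  rw [h4]
  gcongr

end NumericBounds

section ConvexBody

variable {d : ℕ} {e : Esp d} {K : Set (Esp d)}

lemma norm_eq_one_of_mem_uSphere {x : Esp d} (hx : x ∈ uSphere d) : ‖x‖ = 1 := by
  simpa [uSphere] using hx

/-- The point at distance `r ∈ [0, a]` from `e` in direction `u` belongs to `K` if the centred
inradius of `K` is at least `a`. -/
lemma cos_smul_add_sin_smul_mem (hK : IsClosed K) {a : ℝ} (ha : 0 < a) (ha' : a < π / 2)
    (haK : a ≤ rcent d K e) (he : ‖e‖ = 1) {u : Esp d} (hu : ‖u‖ = 1) (hue : ⟪u, e⟫ = 0) :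
    Real.cos a • e + Real.sin a • u ∈ K := by
  have hlt : ∀ r ∈ Set.Ico 0 a, Real.cos r • e + Real.sin r • u ∈ K := by
    intro r hr
    have hne : {r : ℝ | 0 ≤ r ∧ cap e r ⊆ K}.Nonempty := by
      by_contra h
      rw [Set.not_nonempty_iff_eq_empty] at h
      rw [rcent, h, Real.sSup_empty] at haK
      linarith
    obtain ⟨r', ⟨-, hr'K⟩, hrr'⟩ := exists_lt_of_lt_csSup hne (hr.2.trans_le haK)
    apply hr'K
    refine ⟨?_, ?_⟩
    · have h : ‖Real.cos r • e + Real.sin r • u‖ ^ 2 = 1 := by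
        rw [norm_add_sq_real, norm_smul, norm_smul, real_inner_smul_left, real_inner_smul_right,
          real_inner_comm, hue, he, hu, mul_pow, mul_pow, Real.norm_eq_abs, Real.norm_eq_abs,
          sq_abs, sq_abs]
        linarith [Real.sin_sq_add_cos_sq r]
      have := (sq_eq_sq₀ (norm_nonneg _) zero_le_one).1 (h.trans (one_pow 2).symm)
      simpa [uSphere] using this
    · rw [geo, inner_add_left, real_inner_smul_left, real_inner_smul_left, hue,
        real_inner_self_eq_norm_sq, he, one_pow, mul_one, mul_zero, add_zero,
        Real.arccos_cos hr.1 (by linarith [hr.2])]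
      exact hrr'.le
  have hcl : IsClosed {r : ℝ | Real.cos r • e + Real.sin r • u ∈ K} :=
    hK.preimage (by fun_prop)
  have : closure (Set.Ico 0 a) ⊆ {r : ℝ | Real.cos r • e + Real.sin r • u ∈ K} :=
    hcl.closure_subset_iff.2 hlt
  rw [closure_Ico ha.ne] at this
  exact this ⟨ha.le, le_rfl⟩

lemma Rcent_le_pi_div_two (hKS : K ⊆ uSphere d) (hKe : ∀ x ∈ K, 0 ≤ ⟪x, e⟫) :
    Rcent d K e ≤ π / 2 :=
  csInf_le ⟨0, fun _ h => h.1⟩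
    ⟨by positivity, fun x hx => ⟨hKS hx, Real.arccos_le_pi_div_two.2 (hKe x hx)⟩⟩

lemma exists_mem_lt_geo (hKS : K ⊆ uSphere d) {R : ℝ} (hR : 0 ≤ R) (hRK : R < Rcent d K e) :
    ∃ y ∈ K, R < geo y e := by
  by_contra! h
  have : Rcent d K e ≤ R :=
    csInf_le ⟨0, fun _ h => h.1⟩ ⟨hR, fun x hx => ⟨hKS hx, h x hx⟩⟩
  linarith

variable {ι : EuclideanSpace ℝ (Fin d) →ₗᵢ[ℝ] Esp d}

/-- In stereographic coordinates, the hyperplanes hitting a cap of radius `a` correspond to a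
subset of the ball of radius `tan a`. -/
lemma hitting_cap_subset (he : ‖e‖ = 1) (hsurj : ∀ x, ⟪x, e⟫ = 0 → ∃ p, ι p = x)
    {a : ℝ} (ha : 0 < a) (ha' : a < π / 2) :
    {x | ∃ y ∈ cap e a, ⟪x - e, y⟫ = 0} ∩ uSphere d ⊆
      (fun p => stereoInv e (ι p)) '' Metric.closedBall 0 (Real.tan a) := by
  rintro x ⟨⟨y, ⟨hyS, hya⟩, hxy⟩, hxS⟩
  have hx := norm_eq_one_of_mem_uSphere hxS
  have hy := norm_eq_one_of_mem_uSphere hyS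
  have hca : 0 < Real.cos a := Real.cos_pos_of_mem_Ioo ⟨by linarith, by linarith⟩
  have hye : Real.cos a ≤ ⟪y, e⟫ := by
    have h1 := abs_real_inner_le_norm y e
    rw [hy, he, one_mul] at h1
    rw [← Real.cos_arccos (abs_le.1 h1).1 (abs_le.1 h1).2]
    exact Real.cos_le_cos_of_nonneg_of_le_pi (Real.arccos_nonneg _) (by linarith) hya
  have hxe : -1 < ⟪x, e⟫ := by
    have h1 := abs_real_inner_le_norm x e
    rw [hx, he, one_mul] at h1
    refine lt_of_le_of_ne (abs_le.1 h1).1 fun h => ?_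
    have hxe' : x = -e := by
      rw [← sub_eq_zero, sub_neg_eq_add, ← norm_eq_zero, ← sq_eq_zero_iff, norm_add_sq_real, hx,
        he, ← h]
      norm_num
    rw [hxe', inner_sub_left, inner_neg_left, real_inner_comm] at hxy
    linarith
  obtain ⟨p, hpe, hpx, -⟩ := exists_stereoInv_eq he hx hxe
  obtain ⟨q, rfl⟩ := hsurj p hpe
  refine ⟨q, ?_, hpx⟩
  have h := inner_stereoInv_sub (e := e) (p := ι q) y
  rw [hpx, hxy, zero_mul, ι.norm_map] at h
  rw [mem_closedBall_zero_iff, Real.tan_eq_sin_div_cos, le_div_iff₀ hca]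
  set t := ⟪y, e⟫ with ht
  have hey : ⟪e, y⟫ = t := real_inner_comm _ _
  have hn : ‖y - t • e‖ ^ 2 = 1 - t ^ 2 := by
    rw [norm_sub_sq_real, real_inner_smul_right, norm_smul, he, hy, ← ht, mul_one,
      Real.norm_eq_abs, sq_abs]
    ring
  have hsa : 0 < Real.sin a := Real.sin_pos_of_pos_of_lt_pi ha (by linarith)
  have hns : ‖y - t • e‖ ≤ Real.sin a := by
    refine (sq_le_sq₀ (norm_nonneg _) hsa.le).1 ?_
    rw [hn, Real.sin_sq]
    gcongr
  have hqy : ⟪ι q, y⟫ ≤ ‖q‖ * Real.sin a := by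
    have h1 : ⟪ι q, y⟫ = ⟪ι q, y - t • e⟫ := by
      rw [inner_sub_right, real_inner_smul_right, hpe, mul_zero, sub_zero]
    rw [h1, ← ι.norm_map]
    exact (real_inner_le_norm _ _).trans (by gcongr)
  rcases (norm_nonneg q).eq_or_lt with h0 | h0
  · rw [← h0, zero_mul]; exact hsa.le
  · have h1 : ‖q‖ * (‖q‖ * Real.cos a) ≤ ‖q‖ * Real.sin a := by
      have : ‖q‖ ^ 2 * Real.cos a ≤ ‖q‖ ^ 2 * t := by gcongr
      rw [hey] at h
      nlinarith
    exact le_of_mul_le_mul_left h1 h0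

lemma tan_pow_le {a : ℝ} (ha : 0 < a) (ha' : a ≤ π / 4) (hd : 1 ≤ d) :
    Real.tan a ^ d ≤ 2 * (4 * a / π) := by
  have hpi := Real.pi_pos
  have hc : √2 / 2 ≤ Real.cos a := by
    rw [← Real.cos_pi_div_four]
    exact Real.cos_le_cos_of_nonneg_of_le_pi ha.le (by linarith) ha'
  have hs2 : 1 < √2 := Real.lt_sqrt_of_sq_lt (by norm_num)
  have hc0 : 0 < Real.cos a := by linarith
  have ht0 : 0 ≤ Real.tan a := Real.tan_nonneg_of_nonneg_of_le_pi_div_two ha.le (by linarith)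
  have ht1 : Real.tan a ≤ 1 := by
    rw [← Real.tan_pi_div_four]
    exact Real.strictMonoOn_tan.monotoneOn ⟨by linarith, by linarith⟩
      ⟨by linarith, by linarith⟩ ha'
  calc Real.tan a ^ d ≤ Real.tan a ^ 1 := pow_le_pow_of_le_one ht0 ht1 hd
    _ ≤ a / (1 / 2) := by
      rw [pow_one, Real.tan_eq_sin_div_cos]
      have := Real.sin_le ha.le
      gcongr
      linarith
    _ ≤ 2 * (4 * a / π) := by
      rw [show 2 * (4 * a / π) = a / (1 / 2) * (4 / π) by field_simp]
      refine le_mul_of_one_le_right (by positivity) ?_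
      rw [le_div_iff₀ hpi]
      linarith [Real.pi_lt_four]

end ConvexBody

lemma hausdorffMeasure_stereoInv_closedBall_le {d : ℕ} {e : Esp d}
    {ι : EuclideanSpace ℝ (Fin d) →ₗᵢ[ℝ] Esp d} (hd : 1 ≤ d) (he : ‖e‖ = 1)
    (hι : ∀ p, ⟪ι p, e⟫ = 0) (hsurj : ∀ x, ⟪x, e⟫ = 0 → ∃ p, ι p = x)
    {a : ℝ} (ha : 0 < a) (ha' : a < π / 2) :
    μH[(d : ℝ)] ((fun p => stereoInv e (ι p)) '' Metric.closedBall 0 (Real.tan a)) ≤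
      ENNReal.ofReal (2 ^ (d + 1) * (4 * a / π)) *
        μH[(d : ℝ)] (Metric.ball (0 : EuclideanSpace ℝ (Fin d)) 1) := by
  have hpi := Real.pi_pos
  rcases le_total a (π / 4) with h | h
  · have hT0 : 0 ≤ Real.tan a := Real.tan_nonneg_of_nonneg_of_le_pi_div_two ha.le ha'.le
    refine (hausdorffMeasure_stereoInv_image_le he hι _).trans ?_
    rw [Measure.addHaar_closedBall _ _ hT0, finrank_euclideanSpace, Fintype.card_fin, ← mul_assoc,
      ← ENNReal.ofReal_mul (by positivity)]
    rw [pow_succ, mul_assoc]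
    gcongr
    exact tan_pow_le ha h hd
  · refine (measure_mono ?_).trans ((hausdorffMeasure_uSphere_le he hι hsurj).trans ?_)
    · rintro _ ⟨p, -, rfl⟩
      simpa [uSphere] using norm_stereoInv he (hι p)
    · gcongr
      refine le_mul_of_one_le_right (by positivity) ?_
      rw [le_div_iff₀ hpi]
      linarith

/-- Theorem D, second part / Theorem 4.6. Stability for `Ũ_e`:
there is `c(a,d)` bounded below explicitly such that every `K ∈ 𝒦̄_s^d` with
`e ∈ K ⊆ H_e^+`, `r_e(K) ≥ a` and `R_e(K) - r_e(K) ≥ ε` satisfies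
`Ũ_e(K) ≥ (1 + c(a,d) ε^{(d+1)/2}) Ũ_e(B(e,a))`. -/
theorem statement4 (d : ℕ) (hd : 2 ≤ d) (a : ℝ) (ha : 0 < a) (ha' : a < π / 2) :
    ∃ c : ℝ, ((2 * π) ^ (2 * d))⁻¹ * a⁻¹ * (min a (π / 2 - a)) ^ (d - 1) ≤ c ∧
      ∀ (e : Esp d) (ε : ℝ) (K : Set (Esp d)), e ∈ uSphere d →
        0 < ε → ε ≤ 1 → IsSphConvBody d K → e ∈ K → (∀ x ∈ K, 0 ≤ ⟪x, e⟫) →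
        a ≤ rcent d K e → ε ≤ Rcent d K e - rcent d K e →
        Utilde d e K ≥ (1 + c * ε ^ (((d : ℝ) + 1) / 2)) * Utilde d e (cap e a) := by
  refine ⟨_, le_rfl, ?_⟩
  intro e ε K heS hε hε1 hK heK hKe har hRr
  have he := norm_eq_one_of_mem_uSphere heS
  obtain ⟨C, hCcl, hCconv, hCcone, -, -, rfl⟩ := hK
  set K := C ∩ uSphere d
  have hKS : K ⊆ uSphere d := Set.inter_subset_right
  have hKcl : IsClosed K := hCcl.inter Metric.isClosed_sphere
  obtain ⟨ι, hι, hsurj⟩ := exists_linearIsometry_onto_orthogonal he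
  have hεa : ε ≤ π / 2 - a := by linarith [Rcent_le_pi_div_two hKS hKe]
  set N := {x | ∃ y ∈ K, ⟪x - e, y⟫ = 0}
  set f := fun p => stereoInv e (ι p)
  have hfS : ∀ p, f p ∈ uSphere d := fun p => by
    simpa [uSphere] using norm_stereoInv he (hι p)
  have hhit : ∀ p, ∀ y ∈ K, ‖p‖ ^ 2 * ⟪e, y⟫ ≤ ⟪ι p, y⟫ → f p ∈ N := by
    intro p y hy hpy
    have h1 := inner_stereoInv_sub (e := e) (p := ι p) y
    rw [ι.norm_map] at h1
    have h2 : 0 ≤ ⟪f p - e, y⟫ := by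
      refine nonneg_of_mul_nonneg_left (b := 1 + ‖p‖ ^ 2) ?_ (by positivity)
      change ⟪f p - e, y⟫ * (1 + ‖p‖ ^ 2) = _ at h1
      rw [h1]; linarith
    obtain ⟨w, hwC, hw1, hw⟩ := exists_unit_mem_inner_eq_zero hCconv hCcone he heK.1
      (norm_stereoInv he (hι p)) hy.1 (norm_eq_one_of_mem_uSphere hy.2) (hKe y hy) h2
    exact ⟨w, ⟨hwC, by simpa [uSphere] using hw1⟩, hw⟩
  set T := Real.tan a with hT
  set Z := Real.tan (a + ε / 2) with hZ
  have hT0 : 0 < T := Real.tan_pos_of_pos_of_lt_pi_div_two ha ha'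
  have hTZ : T < Z := Real.tan_lt_tan_of_nonneg_of_lt_pi_div_two ha.le (by linarith) (by linarith)
  have hcos : 0 < Real.cos a := Real.cos_pos_of_mem_Ioo ⟨by linarith, by linarith⟩
  -- The ball of radius `tan a` is contained in the stereographic image of `N`.
  have hball : f '' Metric.closedBall 0 T ⊆ N := by
    rintro _ ⟨p, hp, rfl⟩
    rw [mem_closedBall_zero_iff] at hp
    rcases eq_or_ne p 0 with rfl | hp0
    · exact hhit 0 e heK (by simp)
    · have hpn : 0 < ‖p‖ := norm_pos_iff.2 hp0
      have hu : ‖‖p‖⁻¹ • ι p‖ = 1 := by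
        rw [norm_smul, norm_inv, norm_norm, ι.norm_map, inv_mul_cancel₀ hpn.ne']
      have hue : ⟪‖p‖⁻¹ • ι p, e⟫ = 0 := by rw [real_inner_smul_left, hι, mul_zero]
      refine hhit p _ (cos_smul_add_sin_smul_mem hKcl ha ha' har he hu hue) ?_
      have hpe' : ⟪e, ι p⟫ = 0 := by rw [real_inner_comm, hι]
      simp only [inner_add_right, real_inner_smul_right, hpe', hι, real_inner_self_eq_norm_sq, he,
        ι.norm_map]
      rw [hT, Real.tan_eq_sin_div_cos, le_div_iff₀ hcos] at hp
      have : ‖p‖ * (‖p‖ * Real.cos a) ≤ ‖p‖ * Real.sin a := by gcongr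
      have h2 : Real.sin a * (‖p‖⁻¹ * ‖p‖ ^ 2) = ‖p‖ * Real.sin a := by field_simp
      rw [h2]
      linarith
  obtain ⟨y, hyK, hy⟩ := exists_mem_lt_geo (e := e) (R := a + ε / 2) hKS (by linarith)
    (by linarith)
  have hy1 := norm_eq_one_of_mem_uSphere hyK.2
  set s := ⟪y, e⟫ with hs
  have hs0 : 0 ≤ s := hKe y hyK
  have hcR0 : 0 < Real.cos (a + ε / 2) :=
    Real.cos_pos_of_mem_Ioo ⟨by linarith, by linarith⟩
  have hsR : s < Real.cos (a + ε / 2) := by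
    have h1 := abs_real_inner_le_norm y e
    rw [hy1, he, one_mul] at h1
    rw [hs, ← Real.cos_arccos (abs_le.1 h1).1 (abs_le.1 h1).2]
    exact Real.cos_lt_cos_of_nonneg_of_le_pi (by linarith) (Real.arccos_le_pi _) hy
  have hsinR : 0 < Real.sin (a + ε / 2) :=
    Real.sin_pos_of_pos_of_lt_pi (by linarith) (by linarith)
  obtain ⟨z, hz⟩ := hsurj (y - s • e) (by
    rw [inner_sub_left, real_inner_smul_left, real_inner_self_eq_norm_sq, he, ← hs]; ring)
  have hzn : ‖z‖ ^ 2 = 1 - s ^ 2 := by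
    rw [← ι.norm_map, hz, norm_sub_sq_real, real_inner_smul_right, norm_smul, he, hy1, ← hs,
      mul_one, Real.norm_eq_abs, sq_abs]
    ring
  have hzR : Real.sin (a + ε / 2) ≤ ‖z‖ := by
    refine (sq_le_sq₀ hsinR.le (norm_nonneg _)).1 ?_
    rw [hzn, Real.sin_sq]
    gcongr
  have hz0 : 0 < ‖z‖ := hsinR.trans_le hzR
  have hzy : Z * s ≤ ‖z‖ := by
    have h1 : Z * s ≤ Z * Real.cos (a + ε / 2) :=
      mul_le_mul_of_nonneg_left hsR.le (hT0.trans hTZ).le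
    rw [hZ, Real.tan_mul_cos hcR0.ne'] at h1
    exact h1.trans hzR
  set v := ‖z‖⁻¹ • z with hv
  have hv1 : ‖v‖ = 1 := by
    rw [hv, norm_smul, norm_inv, norm_norm, inv_mul_cancel₀ hz0.ne']
  obtain ⟨ρ, hρ0, hρ⟩ : ∃ ρ : ℝ, 0 < ρ ∧ ρ ^ 2 = T * (Z - T) / 2 := by
    have : 0 < T * (Z - T) / 2 := half_pos (mul_pos hT0 (by linarith))
    exact ⟨√(T * (Z - T) / 2), Real.sqrt_pos.2 this, Real.sq_sqrt this.le⟩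
  set A := (Z - T) / 4 with hA
  have hA0 : 0 < A := by rw [hA]; linarith
  set E := (fun w => ((3 * T + Z) / 4 + (A - ρ) * ⟪v, w⟫) • v + ρ • w) '' Metric.ball 0 1
  have hEprop : ∀ p ∈ E, T ^ 2 < ‖p‖ ^ 2 ∧ ‖p‖ ^ 2 ≤ Z * ⟪p, v⟫ ∧ ‖p‖ ^ 2 ≤ Z ^ 2 := by
    rintro p ⟨w, hw, hwp⟩
    exact ellipsoid_subset hv1 (mem_ball_zero_iff.1 hw) hT0 hTZ hA hρ rfl hwp.symm
  -- The ellipsoid is contained in the stereographic image of `N` as well.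
  have hEN : f '' E ⊆ N := by
    rintro _ ⟨p, hp, rfl⟩
    obtain ⟨hp1, hp2, -⟩ := hEprop p hp
    refine hhit p y hyK ?_
    have hyd : y = s • e + ‖z‖ • ι v := by
      rw [hv, map_smul, smul_smul, mul_inv_cancel₀ hz0.ne', one_smul, hz]; abel
    have hpy : ⟪ι p, y⟫ = ‖z‖ * ⟪p, v⟫ := by
      rw [hyd, inner_add_right, real_inner_smul_right, real_inner_smul_right, hι, ι.inner_map_map,
        mul_zero, zero_add]
    have hpv : 0 ≤ ⟪p, v⟫ :=
      nonneg_of_mul_nonneg_right ((sq_nonneg _).trans hp2) (hT0.trans hTZ)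
    rw [hpy, real_inner_comm, ← hs]
    calc ‖p‖ ^ 2 * s ≤ Z * ⟪p, v⟫ * s := by gcongr
      _ = Z * s * ⟪p, v⟫ := by ring
      _ ≤ _ := by gcongr
  set B := f '' Metric.closedBall 0 T with hB
  have hBm : MeasurableSet B :=
    ((isCompact_closedBall _ _).image (lipschitzWith_stereoInv he hι).continuous).measurableSet
  have hdisj : Disjoint (f '' E) B := by
    rw [hB, Set.disjoint_image_iff (injective_stereoInv he hι), Set.disjoint_left]
    intro p hp hpB
    have h1 := mem_closedBall_zero_iff.1 hpB
    have h2 : ‖p‖ ^ 2 ≤ T ^ 2 := by gcongr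
    linarith [(hEprop p hp).1]
  set μ : Measure (Esp d) := μH[(d : ℝ)]
  set β := μH[(d : ℝ)] (Metric.ball (0 : EuclideanSpace ℝ (Fin d)) 1)
  have hβt : β ≠ ∞ := measure_ball_lt_top.ne
  have hSfin : μ (uSphere d) ≠ ∞ :=
    ne_top_of_le_ne_top (ENNReal.mul_ne_top ENNReal.ofReal_ne_top hβt)
      (hausdorffMeasure_uSphere_le he hι hsurj)
  have hfin : ∀ s ⊆ uSphere d, μ s ≠ ∞ := fun s hs => ne_top_of_le_ne_top hSfin (measure_mono hs)
  have himg : ∀ s, f '' s ⊆ uSphere d := by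
    rintro s _ ⟨p, -, rfl⟩
    exact hfS p
  have hσ : ∀ s, sigmaMeas d s = μ (s ∩ uSphere d) := fun s =>
    Measure.restrict_apply' Metric.isClosed_sphere.measurableSet
  have hUK : (μ (f '' E)).toReal + (μ B).toReal ≤ Utilde d e K := by
    rw [Utilde, hσ, ← ENNReal.toReal_add (hfin _ (himg _)) (hfin _ (himg _)),
      ← measure_union hdisj hBm]
    refine ENNReal.toReal_mono (hfin _ Set.inter_subset_right) (measure_mono ?_)
    exact Set.subset_inter (Set.union_subset hEN hball) (Set.union_subset (himg _) (himg _))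
  have hUcap : Utilde d e (cap e a) ≤ (μ B).toReal := by
    rw [Utilde, hσ]
    exact ENNReal.toReal_mono (hfin _ (himg _)) (measure_mono (hitting_cap_subset he hsurj ha ha'))
  have hBle : (μ B).toReal ≤ 2 ^ (d + 1) * (4 * a / π) * β.toReal := by
    have := ENNReal.toReal_mono (ENNReal.mul_ne_top ENNReal.ofReal_ne_top hβt)
      (hausdorffMeasure_stereoInv_closedBall_le (by omega) he hι hsurj ha ha')
    rwa [ENNReal.toReal_mul, ENNReal.toReal_ofReal (by positivity)] at this
  have hEge : A * ρ ^ (d - 1) * β.toReal ≤ ((1 + Z ^ 2) / 2) ^ d * (μ (f '' E)).toReal := by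
    have h1 := hausdorffMeasure_le_stereoInv_image he hι fun p hp => (hEprop p hp).2.2
    rw [hausdorffMeasure_ellipsoid (by omega) hv1 hA0 hρ0] at h1
    have := ENNReal.toReal_mono
      (ENNReal.mul_ne_top ENNReal.ofReal_ne_top (hfin _ (himg E))) h1
    rwa [ENNReal.toReal_mul, ENNReal.toReal_mul, ENNReal.toReal_ofReal (by positivity),
      ENNReal.toReal_ofReal (by positivity)] at this
  have hnum := stability_numeric_bound hd ha hε hεa hT hZ hρ0 hρ
  set c := ((2 * π) ^ (2 * d))⁻¹ * a⁻¹ * (min a (π / 2 - a)) ^ (d - 1) *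
    ε ^ (((d : ℝ) + 1) / 2)
  have hm0 : 0 < min a (π / 2 - a) := lt_min ha (by linarith)
  have hc0 : 0 ≤ c := by positivity
  have hG : 0 < ((1 + Z ^ 2) / 2) ^ d := by positivity
  have hextra : c * (μ B).toReal ≤ (μ (f '' E)).toReal := by
    refine le_of_mul_le_mul_left ?_ hG
    calc ((1 + Z ^ 2) / 2) ^ d * (c * (μ B).toReal)
        ≤ ((1 + Z ^ 2) / 2) ^ d * (c * (2 ^ (d + 1) * (4 * a / π) * β.toReal)) := by gcongr
      _ = c * (2 ^ (d + 1) * (4 * a / π)) * ((1 + Z ^ 2) / 2) ^ d * β.toReal := by ring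
      _ ≤ A * ρ ^ (d - 1) * β.toReal := by gcongr
      _ ≤ _ := hEge
  calc (1 + c) * Utilde d e (cap e a) ≤ (1 + c) * (μ B).toReal := by gcongr
    _ ≤ (μ (f '' E)).toReal + (μ B).toReal := by linarith
    _ ≤ Utilde d e K := hUK

end
end

section
/- For every d ∈ ℕ and every t ≥ 0, e^{−t} + Σ_{k=1}^{∞} [ 2·Σ_{i=0}^{d} binom(k−1,i) ]·(t^k/k!)·e^{−t} = h_d(t). Equivalently, if N(k) := 2·Σ_{i=0}^{d} binom(k−1,i) for k ≥ 1 (Schläfli's count of the cells generated by k great subspheres of S^d in general position) and N(0) := 1, then the expectation of N under a Poisson distribution with mean t equals h_d(t). -/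
open Real MeasureTheory Filter
open scoped RealInnerProductSpace ENNReal NNReal Topology

noncomputable section

/-- The factorial moments of the Poisson distribution, in binomial form. -/
theorem hasSum_choose_mul_poisson (i : ℕ) (t : ℝ) :
    HasSum (fun k : ℕ => (k.choose i : ℝ) * (t ^ k / (Nat.factorial k : ℝ)) * Real.exp (-t))
      (t ^ i / (Nat.factorial i : ℝ)) := by
  have hexp : HasSum (fun j : ℕ => t ^ j / (Nat.factorial j : ℝ)) (Real.exp t) := by
    rw [Real.exp_eq_exp_ℝ]
    exact NormedSpace.expSeries_div_hasSum_exp t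
  have hmul := hexp.mul_left (t ^ i / (Nat.factorial i : ℝ) * Real.exp (-t))
  rw [mul_assoc, ← Real.exp_add, neg_add_cancel, Real.exp_zero, mul_one] at hmul
  refine ((add_left_injective i).hasSum_iff fun k hk => ?_).mp (hmul.congr_fun fun j => ?_)
  · have hki : k < i := by
      by_contra! h
      exact hk ⟨k - i, Nat.sub_add_cancel h⟩
    simp [Nat.choose_eq_zero_of_lt hki]
  · have hfac : ((j + i).choose i : ℝ) * (Nat.factorial j : ℝ) * (Nat.factorial i : ℝ)
        = (Nat.factorial (j + i) : ℝ) := by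
      exact_mod_cast Nat.add_choose_mul_factorial_mul_factorial j i
    have hj : (Nat.factorial j : ℝ) ≠ 0 := by positivity
    have hi : (Nat.factorial i : ℝ) ≠ 0 := by positivity
    have hc : ((j + i).choose i : ℝ) ≠ 0 := by
      exact_mod_cast (Nat.choose_pos (Nat.le_add_left i j)).ne'
    simp only [Function.comp_apply, ← hfac, pow_add]
    field_simp

/-- Schläfli's number of cells generated by `k` great subspheres of `S^d` in general position. -/
def schlafliCount (d k : ℕ) : ℝ :=
  if k = 0 then 1 else 2 * ∑ i ∈ Finset.range (d + 1), ((k - 1).choose i : ℝ)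

theorem schlafliCount_add_two (d k : ℕ) :
    schlafliCount (d + 2) k = schlafliCount d k + 2 * (k.choose (d + 2) : ℝ) := by
  rcases k with _ | k
  · simp [schlafliCount]
  · simp only [schlafliCount, Nat.succ_ne_zero, if_false, Nat.add_sub_cancel,
      Finset.sum_range_succ _ (d + 2), Finset.sum_range_succ _ (d + 1),
      Nat.choose_succ_succ' k (d + 1), Nat.cast_add]
    ring

theorem hFun_add_two (d : ℕ) (t : ℝ) :
    hFun (d + 2) t = hFun d t + 2 * (t ^ (d + 2) / (Nat.factorial (d + 2) : ℝ)) := by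
  have hdiv : (d + 2) / 2 = d / 2 + 1 := by omega
  have hsub : ∀ i, d + 2 - 2 * (i + 1) = d - 2 * i := fun i => by omega
  simp only [hFun, hdiv, Finset.sum_range_succ' _ (d / 2 + 1), hsub, mul_zero, Nat.sub_zero]
  ring

theorem hasSum_schlafliCount_mul_poisson (d : ℕ) (t : ℝ) :
    HasSum (fun k : ℕ => schlafliCount d k * (t ^ k / (Nat.factorial k : ℝ)) * Real.exp (-t))
      (hFun d t) := by
  induction d using Nat.twoStepInduction with
  | zero =>
    have hval : hFun 0 t = 2 * (t ^ 0 / (Nat.factorial 0 : ℝ)) - Real.exp (-t) := by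
      simp [hFun]
      ring
    rw [hval]
    refine (((hasSum_choose_mul_poisson 0 t).mul_left 2).sub
      (hasSum_ite_eq 0 (Real.exp (-t)))).congr_fun fun k => ?_
    rcases k with _ | k <;> simp [schlafliCount] <;> ring
  | one =>
    have hval : hFun 1 t = 2 * (t ^ 1 / (Nat.factorial 1 : ℝ)) + Real.exp (-t) := by
      simp [hFun]
      ring
    rw [hval]
    refine (((hasSum_choose_mul_poisson 1 t).mul_left 2).add
      (hasSum_ite_eq 0 (Real.exp (-t)))).congr_fun fun k => ?_
    rcases k with _ | k <;> simp [schlafliCount, Finset.sum_range_succ] <;> ring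
  | more d ih _ =>
    rw [hFun_add_two]
    convert ih.add ((hasSum_choose_mul_poisson (d + 2) t).mul_left 2) using 2 with k
    rw [schlafliCount_add_two]
    ring

/-- intensity of the cell process; Schläfli. For every `d` and
`t ≥ 0`, the Poisson expectation of Schläfli's cell count
`N(0) = 1`, `N(k) = 2 ∑_{i=0}^d binom(k-1,i)` equals `h_d(t)`:
`e^{-t} + ∑_{k≥1} N(k) (t^k/k!) e^{-t} = h_d(t)`. -/
theorem statement15 (d : ℕ) (t : ℝ) (ht : 0 ≤ t) :
    (Real.exp (-t) + ∑' j : ℕ,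
        (2 * ∑ i ∈ Finset.range (d + 1), (j.choose i : ℝ)) *
          (t ^ (j + 1) / (Nat.factorial (j + 1) : ℝ)) * Real.exp (-t) = hFun d t) ∧
    (∑' k : ℕ,
        (if k = 0 then (1 : ℝ) else
          2 * ∑ i ∈ Finset.range (d + 1), ((k - 1).choose i : ℝ)) *
          (t ^ k / (Nat.factorial k : ℝ)) * Real.exp (-t) = hFun d t) := by
  have hsum := hasSum_schlafliCount_mul_poisson d t
  refine ⟨?_, hsum.tsum_eq⟩
  rw [← hsum.tsum_eq, hsum.summable.tsum_eq_zero_add]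
  simp [schlafliCount]

end
end
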